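/- arXiv:0911.1067 — 5 statements merged into one kernel-verified Lean document; each statement's English description precedes it below -/
import Mathlib

section
/- Let a ∈ E be dominant. Then ⟨ρ − ρ_a, α⟩ = 0 for every α ∈ Φ_a⁺, and ⟨ρ − ρ_a, α⟩ > 0 for every α ∈ Φ⁺ with ⟨α, a⟩ > 0. (This is the paper's claim that ρ − ρ_τ belongs to the open face τ of the Weyl chamber containing a.) -/
/-!
The vector `2 (ρ - ρ_a)` is the sum of the set `N` of roots `γ` with `⟪γ, a⟫ > 0`: dominance of
`a` forces all of these to be positive roots. Fix a root `α` with `⟪α, a⟫ ≥ 0` and let `s` be its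
reflection, which negates `⟪·, α⟫`.

If `⟪α, a⟫ = 0`, then `s` permutes `N`, so `∑ γ ∈ N, ⟪γ, α⟫ = 0`. If `⟪α, a⟫ > 0`, then `s γ ∈ N`
for every `γ ∈ N` with `⟪γ, α⟫ < 0`, so each negative term of `∑ γ ∈ N, ⟪γ, α⟫` is cancelled by
the term of `s γ`; the term of `α` is positive and left over because `s α = -α ∉ N`. Both cases
follow from `two_mul_sum_eq_of_involutive`, which carries out this cancellation.
-/

open scoped RealInnerProductSpace

open Classical in
/-- Cancellation along an involution `s` that negates `f`: the terms of `∑ γ ∈ N, f γ` at points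
which `s` keeps inside `N` cancel in pairs, so only the points that `s` moves out of `N`
contribute. -/
lemma two_mul_sum_eq_of_involutive {X : Type*} (N : Finset X) (f : X → ℝ) (s : X → X)
    (hs : ∀ x, s (s x) = x) (hf : ∀ x, f (s x) = -f x) :
    2 * ∑ x ∈ N, f x = ∑ x ∈ N, if s x ∈ N then 0 else 2 * f x := by
  -- `t` agrees with `s` where `s` preserves `N` and is the identity elsewhere on `N`.
  let t : X → X := fun x => if s x ∈ N then s x else x
  have ht : ∀ x ∈ N, t x ∈ N := by
    intro x hx
    by_cases h : s x ∈ N <;> simp [t, h, hx]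
  have htt : ∀ x ∈ N, t (t x) = x := by
    intro x hx
    by_cases h : s x ∈ N <;> simp [t, h, hx, hs]
  have h1 : ∑ x ∈ N, f x = ∑ x ∈ N, f (t x) :=
    Finset.sum_nbij' t t ht ht htt htt (fun x hx => by rw [htt x hx])
  rw [two_mul]
  nth_rewrite 2 [h1]
  rw [← Finset.sum_add_distrib]
  refine Finset.sum_congr rfl fun x _ => ?_
  by_cases h : s x ∈ N
  · simp [t, h, hf]
  · simp [t, h, two_mul]

/-- For a dominant vector `a`, the vector `ρ - ρ_a` pairs to zero with
every positive root orthogonal to `a`, and pairs strictly positively with every positive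
root not orthogonal to `a`; i.e. `ρ - ρ_a` lies in the open face of the Weyl chamber
containing `a`. -/
theorem rho_sub_rho_a_mem_face
    {E : Type*} [NormedAddCommGroup E] [InnerProductSpace ℝ E] [FiniteDimensional ℝ E]
    -- Φ is a finite, reduced, crystallographic root system
    (Φ : Finset E) (h0 : (0 : E) ∉ Φ)
    (hrefl : ∀ α ∈ Φ, ∀ γ ∈ Φ, γ - (2 * ⟪γ, α⟫ / ⟪α, α⟫) • α ∈ Φ)
    (hred : ∀ α ∈ Φ, ∀ t : ℝ, t • α ∈ Φ → t = 1 ∨ t = -1)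
    (hcrys : ∀ α ∈ Φ, ∀ γ ∈ Φ, ∃ n : ℤ, 2 * ⟪γ, α⟫ / ⟪α, α⟫ = (n : ℝ))
    -- Φpos is a positive system for Φ
    (Φpos : Finset E) (v : E) (hv : ∀ α ∈ Φ, ⟪α, v⟫ ≠ 0)
    (hpos : ∀ α : E, α ∈ Φpos ↔ α ∈ Φ ∧ 0 < ⟪α, v⟫)
    -- ρ is the half sum of the positive roots
    (ρ : E) (hρ : ρ = (2⁻¹ : ℝ) • ∑ α ∈ Φpos, α)
    (a : E) (ha : (∀ α ∈ Φpos, 0 ≤ ⟪a, α⟫))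
    -- Φa is the set of positive roots orthogonal to a, and ρa its half sum
    (Φa : Finset E) (hΦa : ∀ α : E, α ∈ Φa ↔ α ∈ Φpos ∧ ⟪α, a⟫ = 0)
    (ρa : E) (hρa : ρa = (2⁻¹ : ℝ) • ∑ α ∈ Φa, α)
 :
    (∀ α ∈ Φa, ⟪ρ - ρa, α⟫ = 0) ∧
      (∀ α ∈ Φpos, 0 < ⟪α, a⟫ → 0 < ⟪ρ - ρa, α⟫) := by
  classical
  have hne : ∀ α ∈ Φ, ⟪α, α⟫ ≠ 0 := fun α hα h => h0 (inner_self_eq_zero.mp h ▸ hα)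
  have hneg : ∀ α ∈ Φ, -α ∈ Φ := by
    intro α hα
    have h := hrefl α hα α hα
    rw [mul_div_assoc, div_self (hne α hα)] at h
    convert h using 1
    module
  set N : Finset E := Φ.filter fun γ => 0 < ⟪γ, a⟫ with hN
  have memN : ∀ γ, γ ∈ N ↔ γ ∈ Φ ∧ 0 < ⟪γ, a⟫ := fun γ => by simp [hN]
  have hNpos : N = Φpos.filter fun γ => 0 < ⟪γ, a⟫ := by
    ext γ
    rw [memN, Finset.mem_filter, hpos]
    refine ⟨fun ⟨h, h'⟩ => ⟨⟨h, ?_⟩, h'⟩, fun ⟨h, h'⟩ => ⟨h.1, h'⟩⟩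
    by_contra hc
    have hlt : ⟪γ, v⟫ < 0 := lt_of_le_of_ne (not_lt.mp hc) (hv γ h)
    have h2 := ha (-γ) ((hpos _).2 ⟨hneg γ h, by rw [inner_neg_left]; linarith⟩)
    rw [inner_neg_right, real_inner_comm] at h2
    linarith
  have hΦa' : Φa = Φpos.filter fun γ => ¬ 0 < ⟪γ, a⟫ := by
    ext γ
    rw [hΦa, Finset.mem_filter]
    refine and_congr_right fun h => ?_
    have h2 := ha γ h
    rw [real_inner_comm] at h2
    exact ⟨fun h => by simp [h], fun h => le_antisymm (not_lt.mp h) h2⟩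
  have hsum : ∀ α, 4 * ⟪ρ - ρa, α⟫ = 2 * ∑ γ ∈ N, ⟪γ, α⟫ := by
    intro α
    have h : ρ - ρa = (2⁻¹ : ℝ) • ∑ γ ∈ N, γ := by
      rw [hρ, hρa, ← Finset.sum_filter_add_sum_filter_not Φpos (fun γ => 0 < ⟪γ, a⟫), ← hNpos,
        ← hΦa', smul_add, add_sub_cancel_right]
    rw [h, real_inner_smul_left, sum_inner]
    ring
  have key : ∀ α ∈ Φ, 4 * ⟪ρ - ρa, α⟫ =
      ∑ γ ∈ N, if γ - (2 * ⟪γ, α⟫ / ⟪α, α⟫) • α ∈ N then 0 else 2 * ⟪γ, α⟫ := by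
    intro α hα
    have hα' := hne α hα
    have hf : ∀ γ : E, ⟪γ - (2 * ⟪γ, α⟫ / ⟪α, α⟫) • α, α⟫ = -⟪γ, α⟫ := by
      intro γ
      rw [inner_sub_left, real_inner_smul_left, div_mul_cancel₀ _ hα']
      ring
    rw [hsum]
    convert two_mul_sum_eq_of_involutive N (fun γ => ⟪γ, α⟫)
      (fun γ => γ - (2 * ⟪γ, α⟫ / ⟪α, α⟫) • α) ?_ hf
    intro γ
    simp only [hf]
    module
  -- The reflection in `α` stays inside `N` as soon as `⟪γ, α⟫ * ⟪α, a⟫ ≤ 0`.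
  have hmem : ∀ α ∈ Φ, ∀ γ ∈ N, ⟪γ, α⟫ * ⟪α, a⟫ ≤ 0 →
      γ - (2 * ⟪γ, α⟫ / ⟪α, α⟫) • α ∈ N := by
    intro α hα γ hγ h
    obtain ⟨hγ1, hγ2⟩ := (memN γ).1 hγ
    refine (memN _).2 ⟨hrefl α hα γ hγ1, ?_⟩
    rw [inner_sub_left, real_inner_smul_left]
    have h3 : 2 * ⟪γ, α⟫ / ⟪α, α⟫ * ⟪α, a⟫ = 2 * (⟪γ, α⟫ * ⟪α, a⟫) / ⟪α, α⟫ := by ring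
    have h4 : 2 * (⟪γ, α⟫ * ⟪α, a⟫) / ⟪α, α⟫ ≤ 0 :=
      div_nonpos_of_nonpos_of_nonneg (by linarith) real_inner_self_nonneg
    linarith
  constructor
  · intro α hα
    obtain ⟨hα1, hα2⟩ := (hΦa α).1 hα
    have hαΦ := ((hpos α).1 hα1).1
    have h := key α hαΦ
    rw [Finset.sum_eq_zero fun γ hγ => if_pos (hmem α hαΦ γ hγ (by simp [hα2]))] at h
    linarith
  · intro α hα1 hα2
    have hαΦ := ((hpos α).1 hα1).1
    have h := key α hαΦ
    have hαα : 0 < ⟪α, α⟫ := lt_of_le_of_ne real_inner_self_nonneg (hne α hαΦ).symm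
    have hlt : 0 < ∑ γ ∈ N,
        if γ - (2 * ⟪γ, α⟫ / ⟪α, α⟫) • α ∈ N then 0 else 2 * ⟪γ, α⟫ := by
      refine Finset.sum_pos' (fun γ hγ => ?_) ⟨α, (memN α).2 ⟨hαΦ, hα2⟩, ?_⟩
      · split_ifs with hc
        · exact le_rfl
        · by_contra hlt
          exact hc (hmem α hαΦ γ hγ (mul_nonpos_of_nonpos_of_nonneg (by linarith) hα2.le))
      · rw [if_neg]
        · linarith
        · intro hc
          have h5 := ((memN _).1 hc).2
          rw [mul_div_assoc, div_self hαα.ne', inner_sub_left, real_inner_smul_left] at h5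
          linarith
    linarith
end

section
/- Let a ∈ E be dominant. Then for every β ∈ E one has (1/2)∑_{α ∈ Φ_a⁺} |⟨α, β⟩| ≤ ‖ρ_a‖·‖β‖. (This is inequality (26) in the proof of Lemma 4.3: (1/2)Tr_β|𝔨_τ| ≤ ‖ρ_τ‖‖β‖.) -/
/-!
The roots orthogonal to `a` form a root system `Ψ` of which `Φ_a⁺` is a positive system, so it is
enough to treat the positive half `P` of a reflection-stable set `Ψ` (`half_sum_abs_le_of_stable`).
If `x` has nonnegative inner product with every element of `P`, then
`(1/2) ∑_{α ∈ P} |⟪α, x⟫| = ⟪ρ_P, x⟫ ≤ ‖ρ_P‖ ‖x‖` by Cauchy–Schwarz. For a general `β` one wants to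
move `β` into the dominant chamber by the reflections, which change neither `‖β‖` nor
`∑_{α ∈ Ψ} |⟪α, β⟫|`.

Instead of the Weyl orbit of `β`, the proof uses the compact set of all `x` with the same norm
and the same value of `∑_{α ∈ Ψ} |⟪α, x⟫|` as `β`. It is stable under the reflections, and a point
maximising `⟪x, v⟫` on it is dominant, since otherwise a reflection would increase `⟪x, v⟫`
(`exists_dominant_same_sum`).
-/

open scoped RealInnerProductSpace

section RootReflection

variable {E : Type*} [NormedAddCommGroup E] [InnerProductSpace ℝ E]

/-- The orthogonal reflection `s_α` in the hyperplane `α^⊥`. -/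
noncomputable def rootReflection (α : E) : E ≃ₗᵢ[ℝ] E := (ℝ ∙ α)ᗮ.reflection

lemma rootReflection_apply (α x : E) :
    rootReflection α x = x - (2 * ⟪x, α⟫ / ⟪α, α⟫) • α := by
  rw [rootReflection, Submodule.reflection_orthogonal_apply,
    Submodule.reflection_singleton_apply, real_inner_self_eq_norm_sq, real_inner_comm,
    neg_sub, two_smul, ← add_smul]
  congr 2
  simp only [RCLike.ofReal_real_eq_id, id]
  ring

lemma rootReflection_involutive (α x : E) : rootReflection α (rootReflection α x) = x :=
  Submodule.reflection_reflection _ x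

lemma inner_rootReflection (α x y : E) :
    ⟪x, rootReflection α y⟫ = ⟪rootReflection α x, y⟫ := by
  rw [← (rootReflection α).inner_map_map x, rootReflection_involutive]

lemma sum_abs_inner_rootReflection (Ψ : Finset E) (α : E)
    (hα : ∀ γ ∈ Ψ, rootReflection α γ ∈ Ψ) (x : E) :
    ∑ γ ∈ Ψ, |⟪γ, rootReflection α x⟫| = ∑ γ ∈ Ψ, |⟪γ, x⟫| := by
  refine Finset.sum_nbij' (rootReflection α) (rootReflection α) hα hα
    (fun γ _ => rootReflection_involutive α γ) (fun γ _ => rootReflection_involutive α γ) ?_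
  intro γ _
  rw [inner_rootReflection]

/-- A substitute for moving `β` into the dominant chamber by the Weyl group: the point `x` keeps
the two quantities of interest, but need not lie in the orbit of `β`. -/
lemma exists_dominant_same_sum [FiniteDimensional ℝ E] (Ψ : Finset E) (h0 : (0 : E) ∉ Ψ)
    (hrefl : ∀ α ∈ Ψ, ∀ γ ∈ Ψ, rootReflection α γ ∈ Ψ) (v β : E) :
    ∃ x : E, ‖x‖ = ‖β‖ ∧ ∑ γ ∈ Ψ, |⟪γ, x⟫| = ∑ γ ∈ Ψ, |⟪γ, β⟫| ∧
      ∀ α ∈ Ψ, 0 < ⟪α, v⟫ → 0 ≤ ⟪α, x⟫ := by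
  have hK : IsCompact (Metric.sphere (0 : E) ‖β‖ ∩
      {x : E | ∑ γ ∈ Ψ, |⟪γ, x⟫| = ∑ γ ∈ Ψ, |⟪γ, β⟫|}) := by
    have := FiniteDimensional.proper_real E
    exact (isCompact_sphere _ _).inter_right (isClosed_eq (by fun_prop) (by fun_prop))
  obtain ⟨x, ⟨hx, hxsum⟩, hmax⟩ := hK.exists_isMaxOn ⟨β, by simp, rfl⟩
    (f := fun x => ⟪x, v⟫) (by fun_prop)
  rw [mem_sphere_zero_iff_norm] at hx
  refine ⟨x, hx, hxsum, fun α hα hαv => ?_⟩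
  have hle : ⟪rootReflection α x, v⟫ ≤ ⟪x, v⟫ := by
    refine hmax ⟨?_, ?_⟩
    · rw [mem_sphere_zero_iff_norm, LinearIsometryEquiv.norm_map, hx]
    · exact (sum_abs_inner_rootReflection Ψ α (hrefl α hα) x).trans hxsum
  have hαα : 0 < ⟪α, α⟫ := real_inner_self_pos.2 (fun h => h0 (h ▸ hα))
  rw [rootReflection_apply, inner_sub_left, real_inner_smul_left] at hle
  by_contra! hneg
  rw [real_inner_comm] at hneg
  have : 2 * ⟪x, α⟫ / ⟪α, α⟫ < 0 := div_neg_of_neg_of_pos (by linarith) hαα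
  nlinarith [mul_neg_of_neg_of_pos this hαv]

/-- A symmetric set with no element orthogonal to `v` splits into its `v`-positive half and the
negative of that half. -/
lemma sum_abs_eq_two_mul (Ψ P : Finset E) (hneg : ∀ γ ∈ Ψ, -γ ∈ Ψ) (v : E)
    (hv : ∀ α ∈ Ψ, ⟪α, v⟫ ≠ 0) (hP : ∀ α, α ∈ P ↔ α ∈ Ψ ∧ 0 < ⟪α, v⟫) (x : E) :
    ∑ γ ∈ Ψ, |⟪γ, x⟫| = 2 * ∑ γ ∈ P, |⟪γ, x⟫| := by
  classical
  have hPf : P = Ψ.filter (fun α => 0 < ⟪α, v⟫) := by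
    ext α
    rw [hP, Finset.mem_filter]
  rw [← Finset.sum_filter_add_sum_filter_not Ψ (fun α => 0 < ⟪α, v⟫), ← hPf, two_mul]
  congr 1
  refine Finset.sum_nbij' (fun γ => -γ) (fun γ => -γ) ?_ ?_ (by simp) (by simp) (by simp)
  · intro γ hγ
    obtain ⟨hγ, hγv⟩ := Finset.mem_filter.1 hγ
    rw [hP, inner_neg_left]
    exact ⟨hneg γ hγ, neg_pos.2 (lt_of_le_of_ne (not_lt.1 hγv) (hv γ hγ))⟩
  · intro γ hγ
    obtain ⟨hγ, hγv⟩ := (hP γ).1 hγ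
    rw [Finset.mem_filter, inner_neg_left]
    exact ⟨hneg γ hγ, by linarith⟩

lemma half_sum_abs_le_of_stable [FiniteDimensional ℝ E] (Ψ P : Finset E) (h0 : (0 : E) ∉ Ψ)
    (hrefl : ∀ α ∈ Ψ, ∀ γ ∈ Ψ, rootReflection α γ ∈ Ψ) (v : E)
    (hv : ∀ α ∈ Ψ, ⟪α, v⟫ ≠ 0) (hP : ∀ α, α ∈ P ↔ α ∈ Ψ ∧ 0 < ⟪α, v⟫) (β : E) :
    (2⁻¹ : ℝ) * ∑ α ∈ P, |⟪α, β⟫| ≤ ‖(2⁻¹ : ℝ) • ∑ α ∈ P, α‖ * ‖β‖ := by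
  have hneg : ∀ γ ∈ Ψ, -γ ∈ Ψ := by
    intro γ hγ
    have h := hrefl γ hγ γ hγ
    rwa [rootReflection, Submodule.reflection_orthogonalComplement_singleton_eq_neg] at h
  obtain ⟨x, hx, hsum, hdom⟩ := exists_dominant_same_sum Ψ h0 hrefl v β
  rw [sum_abs_eq_two_mul Ψ P hneg v hv hP, sum_abs_eq_two_mul Ψ P hneg v hv hP] at hsum
  calc (2⁻¹ : ℝ) * ∑ α ∈ P, |⟪α, β⟫| = 2⁻¹ * ∑ α ∈ P, |⟪α, x⟫| := by linarith
    _ = 2⁻¹ * ∑ α ∈ P, ⟪α, x⟫ := by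
        congr 1
        refine Finset.sum_congr rfl fun α hα => abs_of_nonneg ?_
        exact hdom α ((hP α).1 hα).1 ((hP α).1 hα).2
    _ = ⟪(2⁻¹ : ℝ) • ∑ α ∈ P, α, x⟫ := by rw [real_inner_smul_left, sum_inner]
    _ ≤ ‖(2⁻¹ : ℝ) • ∑ α ∈ P, α‖ * ‖x‖ := real_inner_le_norm _ _
    _ = ‖(2⁻¹ : ℝ) • ∑ α ∈ P, α‖ * ‖β‖ := by rw [hx]

end RootReflection

/-- For a dominant `a` and every `β`, one has
`(1/2) ∑_{α ∈ Φ_a⁺} |⟪α, β⟫| ≤ ‖ρ_a‖ ‖β‖`. -/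
theorem half_sum_abs_inner_le
    {E : Type*} [NormedAddCommGroup E] [InnerProductSpace ℝ E] [FiniteDimensional ℝ E]
    -- Φ is a finite, reduced, crystallographic root system
    (Φ : Finset E) (h0 : (0 : E) ∉ Φ)
    (hrefl : ∀ α ∈ Φ, ∀ γ ∈ Φ, γ - (2 * ⟪γ, α⟫ / ⟪α, α⟫) • α ∈ Φ)
    (hred : ∀ α ∈ Φ, ∀ t : ℝ, t • α ∈ Φ → t = 1 ∨ t = -1)
    (hcrys : ∀ α ∈ Φ, ∀ γ ∈ Φ, ∃ n : ℤ, 2 * ⟪γ, α⟫ / ⟪α, α⟫ = (n : ℝ))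
    -- Φpos is a positive system for Φ
    (Φpos : Finset E) (v : E) (hv : ∀ α ∈ Φ, ⟪α, v⟫ ≠ 0)
    (hpos : ∀ α : E, α ∈ Φpos ↔ α ∈ Φ ∧ 0 < ⟪α, v⟫)
    -- ρ is the half sum of the positive roots
    (ρ : E) (hρ : ρ = (2⁻¹ : ℝ) • ∑ α ∈ Φpos, α)
    (a : E) (ha : (∀ α ∈ Φpos, 0 ≤ ⟪a, α⟫))
    -- Φa is the set of positive roots orthogonal to a, and ρa its half sum
    (Φa : Finset E) (hΦa : ∀ α : E, α ∈ Φa ↔ α ∈ Φpos ∧ ⟪α, a⟫ = 0)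
    (ρa : E) (hρa : ρa = (2⁻¹ : ℝ) • ∑ α ∈ Φa, α)
    (β : E) :
    (2⁻¹ : ℝ) * ∑ α ∈ Φa, |⟪α, β⟫| ≤ ‖ρa‖ * ‖β‖ := by
  classical
  subst hρa
  refine half_sum_abs_le_of_stable (Φ.filter (fun α => ⟪α, a⟫ = 0)) Φa ?_ ?_ v ?_ ?_ β
  · exact fun h => h0 (Finset.mem_filter.1 h).1
  · intro α hα γ hγ
    rw [Finset.mem_filter] at hα hγ ⊢
    rw [rootReflection_apply, inner_sub_left, real_inner_smul_left, hα.2, hγ.2]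
    exact ⟨hrefl α hα.1 γ hγ.1, by simp⟩
  · exact fun α hα => hv α (Finset.mem_filter.1 hα).1
  · intro α
    rw [hΦa, hpos, Finset.mem_filter]
    tauto
end

section
/- Let a ∈ E and μ ∈ E both be dominant. Then ‖μ + ρ − a‖ ≥ ‖ρ_a‖, and equality holds if and only if μ + ρ − a = ρ_a (in which case ⟨μ, α⟩ = 0 for every α ∈ Φ_a⁺). (This is inequality (25) in the proof of Lemma 4.3, obtained from ⟨μ, ρ_a⟩ ≥ 0, ⟨a, ρ_a⟩ = 0 and ⟨ρ − ρ_a, ρ_a⟩ = 0.) -/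
/-!
Put `x = μ + ρ - a`. The heart of the matter is `‖ρ_a‖² ≤ ⟪x, ρ_a⟫`, which gives
`‖x - ρ_a‖² ≤ ‖x‖² - ‖ρ_a‖²` and hence both the inequality and the equality case.

It follows from `⟪μ, ρ_a⟫ ≥ 0`, `⟪a, ρ_a⟫ = 0` and `⟪ρ - ρ_a, ρ_a⟫ = 0`. For the last one,
`ρ - ρ_a` is half the sum of the positive roots not orthogonal to `a`. For `α ∈ Φ_a⁺`, the
reflection `s_α` fixes `a`, so it preserves this set of roots (a root is in it exactly when it
pairs positively with `a`); the sum of an `s_α`-stable set is orthogonal to `α`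
(`inner_sum_eq_zero_of_reflection_stable`).
-/

open scoped RealInnerProductSpace

/-- In the sum `∑ ⟪β, α⟫` over an `s_α`-stable set, the terms of `β` and `s_α β` cancel. -/
lemma inner_sum_eq_zero_of_reflection_stable
    {E : Type*} [NormedAddCommGroup E] [InnerProductSpace ℝ E]
    (S : Finset E) (α : E) (hα : α ≠ 0)
    (hS : ∀ β ∈ S, β - (2 * ⟪β, α⟫ / ⟪α, α⟫) • α ∈ S) :
    ⟪∑ β ∈ S, β, α⟫ = 0 := by
  have hαα : ⟪α, α⟫ ≠ 0 := inner_self_ne_zero.mpr hα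
  have key : ∀ β : E, ⟪β - (2 * ⟪β, α⟫ / ⟪α, α⟫) • α, α⟫ = -⟪β, α⟫ := by
    intro β
    rw [inner_sub_left, real_inner_smul_left]
    field_simp
    ring
  rw [sum_inner]
  refine Finset.sum_involution (fun β _ => β - (2 * ⟪β, α⟫ / ⟪α, α⟫) • α) ?_ ?_ ?_ ?_
  · intro β _
    rw [key, add_neg_cancel]
  · intro β _ hne heq
    have h := key β
    rw [heq] at h
    exact hne (by linarith)
  · exact hS
  · intro β _
    simp only [key]
    rw [mul_neg, neg_div, neg_smul]
    abel

/-- A root pairing strictly positively with a dominant vector is positive. -/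
lemma mem_pos_of_inner_pos
    {E : Type*} [NormedAddCommGroup E] [InnerProductSpace ℝ E]
    (Φ : Finset E) (h0 : (0 : E) ∉ Φ)
    (hrefl : ∀ α ∈ Φ, ∀ γ ∈ Φ, γ - (2 * ⟪γ, α⟫ / ⟪α, α⟫) • α ∈ Φ)
    (Φpos : Finset E) (v : E) (hv : ∀ α ∈ Φ, ⟪α, v⟫ ≠ 0)
    (hpos : ∀ α : E, α ∈ Φpos ↔ α ∈ Φ ∧ 0 < ⟪α, v⟫)
    (a : E) (ha : ∀ α ∈ Φpos, 0 ≤ ⟪a, α⟫)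
    (γ : E) (hγ : γ ∈ Φ) (hγa : 0 < ⟪a, γ⟫) : γ ∈ Φpos := by
  refine (hpos γ).mpr ⟨hγ, ?_⟩
  by_contra hneg
  have hlt : ⟪γ, v⟫ < 0 := lt_of_le_of_ne (not_lt.mp hneg) (hv γ hγ)
  have hγ0 : γ ≠ 0 := fun h => h0 (h ▸ hγ)
  -- Closure under negation is the case `s_γ γ = -γ` of closure under reflections.
  have hmem : -γ ∈ Φ := by
    have h := hrefl γ hγ γ hγ
    rw [mul_div_assoc, div_self (inner_self_ne_zero.mpr hγ0), mul_one, two_smul] at h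
    simpa using h
  have h := ha (-γ) ((hpos _).mpr ⟨hmem, by rw [inner_neg_left]; linarith⟩)
  rw [inner_neg_right] at h
  linarith

/-- For dominant `a` and `μ`, one has `‖μ + ρ - a‖ ≥ ‖ρ_a‖`, with
equality if and only if `μ + ρ - a = ρ_a` (in which case `⟪μ, α⟫ = 0` for every
`α ∈ Φ_a⁺`). -/
theorem norm_mu_add_rho_sub_a_ge
    {E : Type*} [NormedAddCommGroup E] [InnerProductSpace ℝ E] [FiniteDimensional ℝ E]
    -- Φ is a finite, reduced, crystallographic root system
    (Φ : Finset E) (h0 : (0 : E) ∉ Φ)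
    (hrefl : ∀ α ∈ Φ, ∀ γ ∈ Φ, γ - (2 * ⟪γ, α⟫ / ⟪α, α⟫) • α ∈ Φ)
    (hred : ∀ α ∈ Φ, ∀ t : ℝ, t • α ∈ Φ → t = 1 ∨ t = -1)
    (hcrys : ∀ α ∈ Φ, ∀ γ ∈ Φ, ∃ n : ℤ, 2 * ⟪γ, α⟫ / ⟪α, α⟫ = (n : ℝ))
    -- Φpos is a positive system for Φ
    (Φpos : Finset E) (v : E) (hv : ∀ α ∈ Φ, ⟪α, v⟫ ≠ 0)
    (hpos : ∀ α : E, α ∈ Φpos ↔ α ∈ Φ ∧ 0 < ⟪α, v⟫)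
    -- ρ is the half sum of the positive roots
    (ρ : E) (hρ : ρ = (2⁻¹ : ℝ) • ∑ α ∈ Φpos, α)
    (a μ : E) (ha : (∀ α ∈ Φpos, 0 ≤ ⟪a, α⟫)) (hμ : (∀ α ∈ Φpos, 0 ≤ ⟪μ, α⟫))
    -- Φa is the set of positive roots orthogonal to a, and ρa its half sum
    (Φa : Finset E) (hΦa : ∀ α : E, α ∈ Φa ↔ α ∈ Φpos ∧ ⟪α, a⟫ = 0)
    (ρa : E) (hρa : ρa = (2⁻¹ : ℝ) • ∑ α ∈ Φa, α)
 :
    ‖ρa‖ ≤ ‖μ + ρ - a‖ ∧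
      (‖μ + ρ - a‖ = ‖ρa‖ ↔ μ + ρ - a = ρa) ∧
      (μ + ρ - a = ρa → ∀ α ∈ Φa, ⟪μ, α⟫ = 0) := by
  have haα : ∀ α ∈ Φa, ⟪a, α⟫ = 0 := fun α hα => by
    rw [real_inner_comm]; exact ((hΦa α).mp hα).2
  have hsub : Φa ⊆ Φpos := fun α hα => ((hΦa α).mp hα).1
  have horth : ∀ α ∈ Φa, ⟪ρ - ρa, α⟫ = 0 := by
    classical
    intro α hα
    have hαΦ : α ∈ Φ := ((hpos α).mp (hsub hα)).1
    have hdiff : ρ - ρa = (2⁻¹ : ℝ) • ∑ β ∈ Φpos \ Φa, β := by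
      rw [hρ, hρa, ← smul_sub, ← Finset.sum_sdiff hsub, add_sub_cancel_right]
    rw [hdiff, real_inner_smul_left, inner_sum_eq_zero_of_reflection_stable _ α
      (fun h => h0 (h ▸ hαΦ)), mul_zero]
    intro β hβ
    obtain ⟨hβp, hβa⟩ := Finset.mem_sdiff.mp hβ
    have hβpos : 0 < ⟪a, β⟫ := by
      refine lt_of_le_of_ne (ha β hβp) fun h => hβa ((hΦa β).mpr ⟨hβp, ?_⟩)
      rw [real_inner_comm]; exact h.symm
    have himg : 0 < ⟪a, β - (2 * ⟪β, α⟫ / ⟪α, α⟫) • α⟫ := by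
      rw [inner_sub_right, real_inner_smul_right, haα α hα]
      linarith
    refine Finset.mem_sdiff.mpr ⟨mem_pos_of_inner_pos Φ h0 hrefl Φpos v hv hpos a ha _
      (hrefl α hαΦ β ((hpos β).mp hβp).1) himg, fun h => ?_⟩
    exact himg.ne' (haα _ h)
  have hρa_inner : ∀ x : E, ⟪x, ρa⟫ = 2⁻¹ * ∑ α ∈ Φa, ⟪x, α⟫ := fun x => by
    rw [hρa, real_inner_smul_right, inner_sum]
  have h1 : 0 ≤ ⟪μ, ρa⟫ := by
    rw [hρa_inner]
    exact mul_nonneg (by norm_num) (Finset.sum_nonneg fun α hα => hμ α (hsub hα))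
  have h2 : ⟪a, ρa⟫ = 0 := by
    rw [hρa_inner, Finset.sum_eq_zero haα, mul_zero]
  have h3 : ⟪ρ - ρa, ρa⟫ = 0 := by
    rw [hρa_inner, Finset.sum_eq_zero horth, mul_zero]
  have h4 : ‖ρa‖ ^ 2 ≤ ⟪μ + ρ - a, ρa⟫ := by
    rw [inner_sub_left, real_inner_self_eq_norm_sq] at h3
    rw [inner_sub_left, inner_add_left]
    linarith
  have h5 : ‖μ + ρ - a - ρa‖ ^ 2 ≤ ‖μ + ρ - a‖ ^ 2 - ‖ρa‖ ^ 2 := by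
    rw [norm_sub_sq_real]
    linarith
  refine ⟨?_, ⟨fun h => ?_, fun h => by rw [h]⟩, fun h α hα => ?_⟩
  · refine (sq_le_sq₀ (norm_nonneg _) (norm_nonneg _)).mp ?_
    linarith [sq_nonneg ‖μ + ρ - a - ρa‖]
  · rw [h, sub_self] at h5
    have h6 : ‖μ + ρ - a - ρa‖ = 0 := by
      exact pow_eq_zero_iff (two_ne_zero) |>.mp (le_antisymm h5 (sq_nonneg _))
    exact sub_eq_zero.mp (norm_eq_zero.mp h6)
  · have hμeq : μ = a - (ρ - ρa) := by
      rw [← h]; abel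
    rw [hμeq, inner_sub_left, haα α hα, horth α hα, sub_zero]
end

section
/- Let a ∈ E and μ ∈ E both be dominant, let w ∈ W, and set β = a − w·(μ + ρ). Then ‖β‖² ≥ (1/2)∑_{α ∈ Φ_a⁺} |⟨α, β⟩|. (This is inequality (24) (eq:lem-1) of Lemma 4.3: for a = Φ(m) in the face τ and w ∈ W, the vector β = a − w(μ+ρ) satisfies ‖β‖² ≥ (1/2)Tr_β|𝔨_τ|.) -/
/-!
Write `x = w (μ + ρ)`, let `Ψ` be the set of roots orthogonal to `a`, `P` the roots of `Ψ` that are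
positive on `x`, and `S` the sum of `P`. Since roots come in pairs `±α`,
`∑_{α ∈ Φ_a⁺} |⟪α, β⟫| = ∑_{α ∈ P} ⟪α, x⟫ = ⟪S, x⟫ = -⟪S, β⟫`, the last step because `S ⊥ a`.
Expanding `‖β + S/2‖² ≥ 0` gives `‖β‖² ≥ ⟪S, x⟫ - ‖S‖²/4`, so it suffices that
`‖S‖² ≤ 2 ⟪S, x⟫`, and for this that `⟪α, S⟫ ≤ 2 ⟪α, x⟫` for every `α ∈ P`.

Both this inequality and the regularity of `x` come from one computation. For `α` in a positive
system with sum `S`, the roots kept positive by `s_α` contribute nothing in total to `⟪S, α⟫`, so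
`⟪S, α⟫` is the sum of `⟪γ, α⟫ > 0` over the positive roots `γ` made negative by `s_α`
(`sum_inner_eq_sum_inverted`). As `α` is one of these, `⟪2ρ, α⟫ ≥ ⟪α, α⟫` (`self_le_sum_inner`),
which yields `⟪α, α⟫ ≤ 2 |⟪α, x⟫|` for all roots `α` by invariance under `w`. If `α` is not a sum of
two positive roots it is the only root inverted by `s_α` (`inverted_unique`), so
`⟪α, S⟫ = ⟪α, α⟫ ≤ 2 ⟪α, x⟫`; the decomposable case follows by induction on `⟪α, x⟫`
(`inner_sum_le`).
-/

open scoped RealInnerProductSpace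

/-! ### Root systems and reflections -/

/-- A finite reduced crystallographic root system in a real inner product space. -/
structure IsRootSys {E : Type*} [NormedAddCommGroup E] [InnerProductSpace ℝ E]
    (Ψ : Finset E) : Prop where
  zero_notMem : (0 : E) ∉ Ψ
  refl_mem : ∀ α ∈ Ψ, ∀ γ ∈ Ψ, γ - (2 * ⟪γ, α⟫ / ⟪α, α⟫) • α ∈ Ψ
  reduced : ∀ α ∈ Ψ, ∀ t : ℝ, t • α ∈ Ψ → t = 1 ∨ t = -1
  crys : ∀ α ∈ Ψ, ∀ γ ∈ Ψ, ∃ n : ℤ, 2 * ⟪γ, α⟫ / ⟪α, α⟫ = (n : ℝ)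

/-- The reflection `s_α` applied to `γ` (the identity when `α = 0`). -/
noncomputable def rootRefl {E : Type*} [NormedAddCommGroup E] [InnerProductSpace ℝ E]
    (α γ : E) : E := γ - (2 * ⟪γ, α⟫ / ⟪α, α⟫) • α

/-- The roots of `Ψ` on which `u` is positive; a positive system when `u` is regular. -/
noncomputable def posRoots {E : Type*} [NormedAddCommGroup E] [InnerProductSpace ℝ E]
    (Ψ : Finset E) (u : E) : Finset E := by
  classical exact Ψ.filter (fun α => 0 < ⟪α, u⟫)

section

variable {E : Type*} [NormedAddCommGroup E] [InnerProductSpace ℝ E] {Ψ : Finset E}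

theorem mem_posRoots {u α : E} : α ∈ posRoots Ψ u ↔ α ∈ Ψ ∧ 0 < ⟪α, u⟫ := by
  classical simp [posRoots]

theorem rootRefl_inner_self {α : E} (hα : α ≠ 0) (γ : E) : ⟪rootRefl α γ, α⟫ = -⟪γ, α⟫ := by
  have : ⟪α, α⟫ ≠ 0 := inner_self_ne_zero.2 hα
  rw [rootRefl, inner_sub_left, real_inner_smul_left]
  field_simp
  ring

theorem rootRefl_rootRefl {α : E} (hα : α ≠ 0) (γ : E) : rootRefl α (rootRefl α γ) = γ := by
  have h := rootRefl_inner_self hα γ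
  rw [rootRefl, h, rootRefl]
  module

theorem rootRefl_self {α : E} (hα : α ≠ 0) : rootRefl α α = -α := by
  have : ⟪α, α⟫ ≠ 0 := inner_self_ne_zero.2 hα
  have h2 : 2 * ⟪α, α⟫ / ⟪α, α⟫ = (2 : ℝ) := by field_simp
  rw [rootRefl, h2]
  module

namespace IsRootSys

theorem ne_zero (h : IsRootSys Ψ) {α : E} (hα : α ∈ Ψ) : α ≠ 0 := fun h' => h.zero_notMem (h' ▸ hα)

theorem inner_self_pos (h : IsRootSys Ψ) {α : E} (hα : α ∈ Ψ) : 0 < ⟪α, α⟫ :=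
  real_inner_self_pos.2 (h.ne_zero hα)

theorem rootRefl_mem (h : IsRootSys Ψ) {α γ : E} (hα : α ∈ Ψ) (hγ : γ ∈ Ψ) : rootRefl α γ ∈ Ψ :=
  h.refl_mem α hα γ hγ

theorem neg_mem (h : IsRootSys Ψ) {α : E} (hα : α ∈ Ψ) : -α ∈ Ψ := by
  rw [← rootRefl_self (h.ne_zero hα)]
  exact h.rootRefl_mem hα hα

/-- Summing an even function over a root system doubles its sum over any positive system. -/
theorem sum_even (h : IsRootSys Ψ) {u : E} (hu : ∀ α ∈ Ψ, ⟪α, u⟫ ≠ 0) (f : E → ℝ) (hf : ∀ α, f (-α) = f α) :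
    ∑ α ∈ Ψ, f α = 2 * ∑ α ∈ posRoots Ψ u, f α := by
  classical
  have key : ∑ α ∈ Ψ.filter (fun α => ¬ 0 < ⟪α, u⟫), f α = ∑ α ∈ posRoots Ψ u, f α := by
    refine Finset.sum_bij' (fun α _ => -α) (fun α _ => -α) ?_ ?_ ?_ ?_ ?_
    · intro α hα
      rw [Finset.mem_filter] at hα
      rw [mem_posRoots, inner_neg_left]
      exact ⟨h.neg_mem hα.1, by
        have := lt_of_le_of_ne (not_lt.1 hα.2) (hu α hα.1)
        linarith⟩
    · intro α hα
      rw [mem_posRoots] at hα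
      rw [Finset.mem_filter, inner_neg_left]
      exact ⟨h.neg_mem hα.1, by linarith [hα.2]⟩
    · simp
    · simp
    · intro α _
      exact (hf α).symm
  rw [← Finset.sum_filter_add_sum_filter_not Ψ (fun α => 0 < ⟪α, u⟫), key, two_mul]
  congr 1

/-! ### Positive roots inverted by a reflection -/

/-- A positive root `γ` inverted by `s_α`, with `α` positive, pairs positively with `α`. -/
theorem inner_pos_of_inverted (h : IsRootSys Ψ) {u α γ : E} (hα : α ∈ posRoots Ψ u) (hγ : γ ∈ posRoots Ψ u)
    (hi : ⟪rootRefl α γ, u⟫ < 0) : 0 < ⟪γ, α⟫ := by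
  rw [mem_posRoots] at hα hγ
  by_contra hle
  rw [rootRefl, inner_sub_left, real_inner_smul_left] at hi
  have h1 : 2 * ⟪γ, α⟫ / ⟪α, α⟫ ≤ 0 :=
    div_nonpos_of_nonpos_of_nonneg (by linarith) (h.inner_self_pos hα.1).le
  nlinarith [mul_nonneg (neg_nonneg.2 h1) hα.2.le, hγ.2]

/-- The positive roots that `s_α` keeps positive are permuted by `s_α`, so their contributions to
`⟪S, α⟫` cancel. -/
theorem sum_inner_eq_sum_inverted (h : IsRootSys Ψ) {u α : E} (hu : ∀ α ∈ Ψ, ⟪α, u⟫ ≠ 0) (hα : α ∈ Ψ)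
    [DecidablePred fun γ => ⟪rootRefl α γ, u⟫ < 0] :
    ∑ γ ∈ posRoots Ψ u, ⟪γ, α⟫ =
      ∑ γ ∈ (posRoots Ψ u).filter (fun γ => ⟪rootRefl α γ, u⟫ < 0), ⟪γ, α⟫ := by
  have h0 := h.ne_zero hα
  rw [← Finset.sum_filter_add_sum_filter_not (posRoots Ψ u) (fun γ => ⟪rootRefl α γ, u⟫ < 0)]
  have hmem : ∀ γ ∈ (posRoots Ψ u).filter (fun γ => ¬ ⟪rootRefl α γ, u⟫ < 0),
      rootRefl α γ ∈ (posRoots Ψ u).filter (fun γ => ¬ ⟪rootRefl α γ, u⟫ < 0) := by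
    intro γ hγ
    rw [Finset.mem_filter, mem_posRoots] at hγ ⊢
    have hm := h.rootRefl_mem hα hγ.1.1
    rw [rootRefl_rootRefl h0]
    exact ⟨⟨hm, lt_of_le_of_ne (not_lt.1 hγ.2) (hu _ hm).symm⟩, hγ.1.2.le.not_gt⟩
  have key : ∑ γ ∈ (posRoots Ψ u).filter (fun γ => ¬ ⟪rootRefl α γ, u⟫ < 0), ⟪γ, α⟫ =
      ∑ γ ∈ (posRoots Ψ u).filter (fun γ => ¬ ⟪rootRefl α γ, u⟫ < 0), -⟪γ, α⟫ := by
    refine Finset.sum_bij' (fun γ _ => rootRefl α γ) (fun γ _ => rootRefl α γ) hmem hmem ?_ ?_ ?_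
    · intro γ _
      exact rootRefl_rootRefl h0 γ
    · intro γ _
      exact rootRefl_rootRefl h0 γ
    · intro γ _
      rw [rootRefl_inner_self h0, neg_neg]
  rw [Finset.sum_neg_distrib] at key
  linarith

/-- In terms of the half sum `ρ` and coroots: `⟪ρ, α^∨⟫ ≥ 1` for every positive root `α`. -/
theorem self_le_sum_inner (h : IsRootSys Ψ) {u α : E} (hu : ∀ α ∈ Ψ, ⟪α, u⟫ ≠ 0) (hα : α ∈ posRoots Ψ u) :
    ⟪α, α⟫ ≤ ∑ γ ∈ posRoots Ψ u, ⟪γ, α⟫ := by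
  classical
  have hα' := mem_posRoots.1 hα
  rw [h.sum_inner_eq_sum_inverted hu hα'.1]
  refine Finset.single_le_sum (f := fun γ => ⟪γ, α⟫) ?_ ?_
  · intro γ hγ
    rw [Finset.mem_filter] at hγ
    exact (h.inner_pos_of_inverted hα hγ.1 hγ.2).le
  · rw [Finset.mem_filter, rootRefl_self (h.ne_zero hα'.1), inner_neg_left]
    exact ⟨hα, by linarith [hα'.2]⟩

/-! ### Indecomposable roots and dominance -/

/-- Two distinct roots at an acute angle differ by a root: the product of the two Cartan integers
is less than `4`, so one of them is `1`. -/
theorem sub_mem (h : IsRootSys Ψ) {α γ : E} (hα : α ∈ Ψ) (hγ : γ ∈ Ψ) (hne : γ ≠ α) (hpos : 0 < ⟪γ, α⟫) :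
    γ - α ∈ Ψ := by
  have hαα := h.inner_self_pos hα
  have hγγ := h.inner_self_pos hγ
  obtain ⟨n, hn⟩ := h.crys α hα γ hγ
  obtain ⟨m, hm⟩ := h.crys γ hγ α hα
  have hr1 := h.refl_mem α hα γ hγ
  have hr2 := h.refl_mem γ hγ α hα
  rw [hn] at hr1
  rw [hm] at hr2
  rw [real_inner_comm] at hm
  have hn0 : (0 : ℝ) < n := by rw [← hn]; positivity
  have hm0 : (0 : ℝ) < m := by rw [← hm]; positivity
  -- Strict Cauchy-Schwarz, as reducedness excludes proportional roots.
  have hcs : ⟪γ, α⟫ * ⟪γ, α⟫ < ⟪γ, γ⟫ * ⟪α, α⟫ := by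
    refine lt_of_le_of_ne (real_inner_mul_inner_self_le γ α) fun heq => ?_
    have hz : γ - (⟪γ, α⟫ / ⟪α, α⟫) • α = 0 := by
      rw [← inner_self_eq_zero (𝕜 := ℝ)]
      simp only [inner_sub_left, inner_sub_right, real_inner_smul_left, real_inner_smul_right,
        real_inner_comm γ α]
      field_simp
      linarith
    have hγe : (⟪γ, α⟫ / ⟪α, α⟫) • α = γ := (sub_eq_zero.1 hz).symm
    rcases h.reduced α hα (⟪γ, α⟫ / ⟪α, α⟫) (by rw [hγe]; exact hγ) with h1 | h1
    · rw [h1, one_smul] at hγe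
      exact hne hγe.symm
    · have : 0 < ⟪γ, α⟫ / ⟪α, α⟫ := by positivity
      linarith
  have hnm : (n : ℝ) * m < 4 := by
    rw [← hn, ← hm, div_mul_div_comm, div_lt_iff₀ (by positivity)]
    linarith
  have hn0' : 0 < n := by exact_mod_cast hn0
  have hm0' : 0 < m := by exact_mod_cast hm0
  have hnm' : n * m < 4 := by exact_mod_cast hnm
  have hor : n = 1 ∨ m = 1 := by
    by_contra hc
    push Not at hc
    have h1 : 2 ≤ n := by omega
    have h2 : 2 ≤ m := by omega
    nlinarith
  rcases hor with rfl | rfl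
  · simpa using hr1
  · simpa using h.neg_mem hr2

/-- If the positive root `α` is not a sum of two positive roots, it is the only positive root
inverted by `s_α`. A second inverted root `γ` of minimal height `⟪γ, u⟫` is impossible: `γ - α` is a
root, and either `α = γ + (α - γ)` or `α = -s_α γ + s_α (γ - α)` decomposes `α`, or `γ - α` is
again inverted and of smaller height. -/
theorem inverted_unique (h : IsRootSys Ψ) {u α : E} (hu : ∀ α ∈ Ψ, ⟪α, u⟫ ≠ 0) (hα : α ∈ posRoots Ψ u)
    (hindec : ∀ γ ∈ posRoots Ψ u, ∀ δ ∈ posRoots Ψ u, γ + δ ≠ α)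
    {γ : E} (hγ : γ ∈ posRoots Ψ u) (hi : ⟪rootRefl α γ, u⟫ < 0) : γ = α := by
  classical
  by_contra hne
  let I := (posRoots Ψ u).filter (fun γ => ⟪rootRefl α γ, u⟫ < 0 ∧ γ ≠ α)
  have hI : I.Nonempty := ⟨γ, Finset.mem_filter.2 ⟨hγ, hi, hne⟩⟩
  obtain ⟨ε, hε, hmin⟩ := Finset.exists_min_image I (fun γ => ⟪γ, u⟫) hI
  obtain ⟨hεP, hεi, hεne⟩ := Finset.mem_filter.1 hε
  have hα' := mem_posRoots.1 hα
  have hε' := mem_posRoots.1 hεP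
  have h0 := h.ne_zero hα'.1
  have hδ : ε - α ∈ Ψ :=
    h.sub_mem hα'.1 hε'.1 hεne (h.inner_pos_of_inverted hα hεP hεi)
  have hrδ : rootRefl α (ε - α) = rootRefl α ε + α := by
    have : ⟪α, α⟫ ≠ 0 := (h.inner_self_pos hα'.1).ne'
    have h2 : 2 * ⟪ε - α, α⟫ / ⟪α, α⟫ = 2 * ⟪ε, α⟫ / ⟪α, α⟫ - 2 := by
      rw [inner_sub_left]
      field_simp
    rw [rootRefl, rootRefl, h2]
    module
  rcases lt_or_gt_of_ne (hu _ hδ) with hneg | hpos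
  · refine hindec ε hεP (-(ε - α)) (mem_posRoots.2 ⟨h.neg_mem hδ, ?_⟩) (by abel)
    rw [inner_neg_left]
    linarith
  · have hrm := h.rootRefl_mem hα'.1 hδ
    rcases lt_or_gt_of_ne (hu _ hrm) with hneg' | hpos'
    · have hle := hmin (ε - α) (Finset.mem_filter.2 ⟨mem_posRoots.2 ⟨hδ, hpos⟩, hneg', ?_⟩)
      · rw [inner_sub_left] at hle
        linarith [hα'.2]
      · intro heq
        have h2 : (2 : ℝ) • α = ε := by
          rw [two_smul]
          nth_rewrite 1 [← heq]
          abel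
        rcases h.reduced α hα'.1 2 (h2 ▸ hε'.1) with h3 | h3 <;> norm_num at h3
    · refine hindec (-rootRefl α ε)
        (mem_posRoots.2 ⟨h.neg_mem (h.rootRefl_mem hα'.1 hε'.1), ?_⟩)
        (rootRefl α (ε - α)) (mem_posRoots.2 ⟨hrm, hpos'⟩) ?_
      · rw [inner_neg_left]
        linarith
      · rw [hrδ]
        abel

/-- If `⟪u, α^∨⟫ ≥ 1` for every root `α` positive on `u`, then `u` minus the half sum of these roots
is dominant for them. -/
theorem inner_sum_le (h : IsRootSys Ψ) {u : E} (hu : ∀ α ∈ Ψ, ⟪α, u⟫ ≠ 0)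
    (hu1 : ∀ α ∈ posRoots Ψ u, ⟪α, α⟫ ≤ 2 * ⟪α, u⟫) :
    ∀ α ∈ posRoots Ψ u, ∑ γ ∈ posRoots Ψ u, ⟪γ, α⟫ ≤ 2 * ⟪α, u⟫ := by
  classical
  by_contra hc
  push Not at hc
  let B := (posRoots Ψ u).filter (fun α => 2 * ⟪α, u⟫ < ∑ γ ∈ posRoots Ψ u, ⟪γ, α⟫)
  have hB : B.Nonempty := by
    obtain ⟨α, h1, h2⟩ := hc
    exact ⟨α, Finset.mem_filter.2 ⟨h1, h2⟩⟩
  obtain ⟨α, hαB, hmin⟩ := Finset.exists_min_image B (fun γ => ⟪γ, u⟫) hB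
  obtain ⟨hα, hbad⟩ := Finset.mem_filter.1 hαB
  have hα' := mem_posRoots.1 hα
  -- Roots of height less than that of `α` satisfy the inequality.
  have hgood : ∀ γ ∈ posRoots Ψ u, ⟪γ, u⟫ < ⟪α, u⟫ →
      ∑ δ ∈ posRoots Ψ u, ⟪δ, γ⟫ ≤ 2 * ⟪γ, u⟫ := by
    intro γ hγ hlt
    by_contra hb
    exact absurd (hmin γ (Finset.mem_filter.2 ⟨hγ, not_le.1 hb⟩)) (not_le.2 hlt)
  by_cases hindec : ∀ γ ∈ posRoots Ψ u, ∀ δ ∈ posRoots Ψ u, γ + δ ≠ α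
  · have hI : (posRoots Ψ u).filter (fun γ => ⟪rootRefl α γ, u⟫ < 0) = {α} := by
      ext γ
      rw [Finset.mem_filter, Finset.mem_singleton]
      constructor
      · rintro ⟨h1, h2⟩
        exact h.inverted_unique hu hα hindec h1 h2
      · rintro rfl
        rw [rootRefl_self (h.ne_zero hα'.1), inner_neg_left]
        exact ⟨hα, by linarith [hα'.2]⟩
    rw [h.sum_inner_eq_sum_inverted hu hα'.1, hI, Finset.sum_singleton] at hbad
    linarith [hu1 α hα]
  · push Not at hindec
    obtain ⟨γ, hγ, δ, hδ, rfl⟩ := hindec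
    have hγ' := mem_posRoots.1 hγ
    have hδ' := mem_posRoots.1 hδ
    have e : ⟪γ + δ, u⟫ = ⟪γ, u⟫ + ⟪δ, u⟫ := inner_add_left _ _ _
    have h1 := hgood γ hγ (by linarith [hδ'.2])
    have h2 := hgood δ hδ (by linarith [hγ'.2])
    simp only [inner_add_right, Finset.sum_add_distrib] at hbad
    linarith

/-! ### Orthogonal subsystems and the Weyl group -/

/-- The roots orthogonal to a vector form a root system. -/
theorem orthogonal (h : IsRootSys Ψ) (a : E) [DecidablePred fun α : E => ⟪α, a⟫ = 0] :
    IsRootSys (Ψ.filter fun α => ⟪α, a⟫ = 0) where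
  zero_notMem h0 := h.zero_notMem (Finset.mem_filter.1 h0).1
  refl_mem α hα γ hγ := by
    rw [Finset.mem_filter] at *
    refine ⟨h.refl_mem α hα.1 γ hγ.1, ?_⟩
    rw [inner_sub_left, real_inner_smul_left, hα.2, hγ.2]
    ring
  reduced α hα t ht := h.reduced α (Finset.mem_filter.1 hα).1 t (Finset.mem_filter.1 ht).1
  crys α hα γ hγ := h.crys α (Finset.mem_filter.1 hα).1 γ (Finset.mem_filter.1 hγ).1

/-- Inverses of Weyl group elements preserve the root system. -/
theorem weyl_symm_mem (h : IsRootSys Ψ) {w : E ≃ₗᵢ[ℝ] E} (hw : w ∈ Subgroup.closure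
      { w : E ≃ₗᵢ[ℝ] E | ∃ α ∈ Ψ, ∀ x : E, w x = x - (2 * ⟪x, α⟫ / ⟪α, α⟫) • α }) :
    ∀ γ ∈ Ψ, w.symm γ ∈ Ψ := by
  have hiff : ∀ γ, w γ ∈ Ψ ↔ γ ∈ Ψ := by
    induction hw using Subgroup.closure_induction with
    | mem s hs =>
      obtain ⟨α, hα, hs⟩ := hs
      have hs' : ∀ x, s x = rootRefl α x := hs
      intro γ
      rw [hs']
      refine ⟨fun hm => ?_, h.rootRefl_mem hα⟩
      rw [← rootRefl_rootRefl (h.ne_zero hα) γ]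
      exact h.rootRefl_mem hα hm
    | one => intro γ; rfl
    | mul s t _ _ hs ht =>
      intro γ
      exact (hs (t γ)).trans (ht γ)
    | inv s _ hs =>
      intro γ
      rw [← hs]
      change s (s.symm γ) ∈ Ψ ↔ _
      rw [s.apply_symm_apply]
  intro γ hγ
  rw [← hiff, w.apply_symm_apply]
  exact hγ

end IsRootSys

end

/-! ### The inequality -/

/-- For dominant `a` and `μ`, `w ∈ W` and `β = a - w (μ + ρ)`, one has
`‖β‖² ≥ (1/2) ∑_{α ∈ Φ_a⁺} |⟪α, β⟫|`. -/
theorem norm_sq_beta_ge_half_trace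
    {E : Type*} [NormedAddCommGroup E] [InnerProductSpace ℝ E] [FiniteDimensional ℝ E]
    -- Φ is a finite, reduced, crystallographic root system
    (Φ : Finset E) (h0 : (0 : E) ∉ Φ)
    (hrefl : ∀ α ∈ Φ, ∀ γ ∈ Φ, γ - (2 * ⟪γ, α⟫ / ⟪α, α⟫) • α ∈ Φ)
    (hred : ∀ α ∈ Φ, ∀ t : ℝ, t • α ∈ Φ → t = 1 ∨ t = -1)
    (hcrys : ∀ α ∈ Φ, ∀ γ ∈ Φ, ∃ n : ℤ, 2 * ⟪γ, α⟫ / ⟪α, α⟫ = (n : ℝ))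
    -- Φpos is a positive system for Φ
    (Φpos : Finset E) (v : E) (hv : ∀ α ∈ Φ, ⟪α, v⟫ ≠ 0)
    (hpos : ∀ α : E, α ∈ Φpos ↔ α ∈ Φ ∧ 0 < ⟪α, v⟫)
    -- ρ is the half sum of the positive roots
    (ρ : E) (hρ : ρ = (2⁻¹ : ℝ) • ∑ α ∈ Φpos, α)
    -- W is the Weyl group: the subgroup generated by the reflections s_α, α ∈ Φ
    (W : Subgroup (E ≃ₗᵢ[ℝ] E))
    (hW : W = Subgroup.closure
      { w : E ≃ₗᵢ[ℝ] E | ∃ α ∈ Φ, ∀ x : E, w x = x - (2 * ⟪x, α⟫ / ⟪α, α⟫) • α })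
    (a μ : E) (ha : (∀ α ∈ Φpos, 0 ≤ ⟪a, α⟫)) (hμ : (∀ α ∈ Φpos, 0 ≤ ⟪μ, α⟫))
    -- Φa is the set of positive roots orthogonal to a, and ρa its half sum
    (Φa : Finset E) (hΦa : ∀ α : E, α ∈ Φa ↔ α ∈ Φpos ∧ ⟪α, a⟫ = 0)
    (ρa : E) (hρa : ρa = (2⁻¹ : ℝ) • ∑ α ∈ Φa, α)
    (w : E ≃ₗᵢ[ℝ] E) (hw : w ∈ W)
    (β : E) (hβ : β = a - w (μ + ρ)) :
    (2⁻¹ : ℝ) * ∑ α ∈ Φa, |⟪α, β⟫| ≤ ‖β‖ ^ 2 := by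
  classical
  have h : IsRootSys Φ := ⟨h0, hrefl, hred, hcrys⟩
  have hΦpos : Φpos = posRoots Φ v := by
    ext α
    rw [hpos, mem_posRoots]
  subst hΦpos
  set x := w (μ + ρ) with hx
  -- Positive roots pair with `μ + ρ` to at least half their squared length.
  have hμρ : ∀ α ∈ posRoots Φ v, ⟪α, α⟫ ≤ 2 * ⟪α, μ + ρ⟫ := by
    intro α hα
    have h1 := h.self_le_sum_inner hv hα
    have h2 := hμ α hα
    rw [← sum_inner] at h1
    rw [real_inner_comm (μ + ρ) α, inner_add_left, hρ, real_inner_smul_left]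
    linarith
  have hxreg : ∀ α ∈ Φ, ⟪α, α⟫ ≤ 2 * |⟪α, x⟫| := by
    intro α hα
    have hm := h.weyl_symm_mem (hW ▸ hw) α hα
    have e1 : ⟪w.symm α, μ + ρ⟫ = ⟪α, x⟫ := by
      rw [hx, ← w.inner_map_map, w.apply_symm_apply]
    have e2 : ⟪w.symm α, w.symm α⟫ = ⟪α, α⟫ := w.symm.inner_map_map α α
    rcases lt_or_gt_of_ne (hv _ hm) with hneg | hps
    · have h1 := hμρ (-w.symm α) (mem_posRoots.2
        ⟨h.neg_mem hm, by rw [inner_neg_left]; linarith⟩)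
      rw [inner_neg_neg, e2, inner_neg_left, e1] at h1
      linarith [neg_le_abs ⟪α, x⟫]
    · have h1 := hμρ (w.symm α) (mem_posRoots.2 ⟨hm, hps⟩)
      rw [e2, e1] at h1
      linarith [le_abs_self ⟪α, x⟫]
  set Ψ := Φ.filter (fun α => ⟪α, a⟫ = 0) with hΨ
  have hΨs : IsRootSys Ψ := h.orthogonal a
  have hsub : ∀ α ∈ Ψ, α ∈ Φ := fun α hα => (Finset.mem_filter.1 hα).1
  have hux : ∀ α ∈ Ψ, ⟪α, x⟫ ≠ 0 := by
    intro α hα hz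
    have h1 := hxreg α (hsub α hα)
    have h2 := hΨs.inner_self_pos hα
    rw [hz, abs_zero] at h1
    linarith
  have hΦa' : Φa = posRoots Ψ v := by
    ext α
    rw [hΦa, mem_posRoots, mem_posRoots, hΨ, Finset.mem_filter]
    tauto
  set S := ∑ γ ∈ posRoots Ψ x, γ with hS
  have hSx : ⟪S, x⟫ = ∑ α ∈ posRoots Ψ x, ⟪α, x⟫ := sum_inner _ _ _
  have hSa : ⟪S, a⟫ = 0 := by
    rw [hS, sum_inner]
    refine Finset.sum_eq_zero fun α hα => ?_
    exact (Finset.mem_filter.1 (mem_posRoots.1 hα).1).2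
  have hT : ∑ α ∈ Φa, |⟪α, β⟫| = ⟪S, x⟫ := by
    have h1 : ∑ α ∈ Φa, |⟪α, β⟫| = ∑ α ∈ posRoots Ψ v, |⟪α, x⟫| := by
      rw [hΦa']
      refine Finset.sum_congr rfl fun α hα => ?_
      have h2 : ⟪α, a⟫ = 0 := (Finset.mem_filter.1 (mem_posRoots.1 hα).1).2
      rw [hβ, inner_sub_right, h2, zero_sub, abs_neg]
    have h2 : ∑ α ∈ posRoots Ψ x, |⟪α, x⟫| = ⟪S, x⟫ := by
      rw [hSx]
      exact Finset.sum_congr rfl fun α hα => abs_of_pos (mem_posRoots.1 hα).2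
    have hf : ∀ α : E, |⟪-α, x⟫| = |⟪α, x⟫| := fun α => by rw [inner_neg_left, abs_neg]
    have h3 := hΨs.sum_even (fun α hα => hv α (hsub α hα)) (fun α => |⟪α, x⟫|) hf
    have h4 := hΨs.sum_even hux (fun α => |⟪α, x⟫|) hf
    linarith
  have hSS : ⟪S, S⟫ ≤ 2 * ⟪S, x⟫ := by
    have hle := hΨs.inner_sum_le hux (fun α hα => by
      have h1 := mem_posRoots.1 hα
      have h2 := hxreg α (hsub α h1.1)
      rwa [abs_of_pos h1.2] at h2)
    calc ⟪S, S⟫ = ∑ α ∈ posRoots Ψ x, ∑ γ ∈ posRoots Ψ x, ⟪γ, α⟫ := by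
          rw [hS, inner_sum]
          exact Finset.sum_congr rfl fun α _ => sum_inner _ _ _
      _ ≤ ∑ α ∈ posRoots Ψ x, 2 * ⟪α, x⟫ := Finset.sum_le_sum hle
      _ = 2 * ⟪S, x⟫ := by rw [hSx, Finset.mul_sum]
  have hSβ : ⟪S, β⟫ = -⟪S, x⟫ := by rw [hβ, inner_sub_right, hSa, zero_sub]
  have hsq : 0 ≤ ⟪β + (2⁻¹ : ℝ) • S, β + (2⁻¹ : ℝ) • S⟫ := real_inner_self_nonneg
  simp only [inner_add_left, inner_add_right, real_inner_smul_left, real_inner_smul_right,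
    real_inner_comm S β, hSβ] at hsq
  rw [hT, ← real_inner_self_eq_norm_sq]
  linarith [real_inner_comm S β]
end

section
/- Let a ∈ E and μ ∈ E both be dominant, let w ∈ W, and set β = a − w·(μ + ρ). Then equality ‖β‖² = (1/2)∑_{α ∈ Φ_a⁺} |⟨α, β⟩| holds if and only if w ∈ W_a and a = μ + ρ − ρ_a; in that case ⟨μ, α⟩ = 0 for every α ∈ Φ_a⁺ and β = −w·ρ_a, so that β belongs to the W-orbit of −ρ_a. (This is the equality analysis in Lemma 4.3 of the paper.) -/
/-!
Put `x = w (μ + ρ)`. The term `½ ∑_{α ∈ Φ_a⁺} |⟪α, x⟫|` is `W_a`-invariant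
(`sum_abs_inner_map`) and `W_a` fixes `a`, so `x` may be replaced by its `Φ_a`-dominant conjugate
`y = g x = w' (μ + ρ)`, where `g ∈ W_a` and `w' = g w` (`exists_dominant`); the term then equals
`⟪ρ_a, y⟫`. As `ρ` is strictly dominant, `Φ_a⁺` is contained in the positive system `P = w' Φ⁺`,
whence `w' ρ = ρ_a + κ` with `κ` the half sum of `S = P \ Φ_a⁺`. With `b = w' μ + κ` one finds
`‖y - a‖² - ⟪ρ_a, y⟫ = ‖b - a‖² + ⟪ρ_a, b⟫`.
Pairing each `γ ∈ S` with `s_α γ` gives `⟪κ, α⟫ ≥ 0` for `α ∈ Φ_a⁺`, with equality only if `s_α`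
preserves `S` (`sum_inner_nonneg`, `sum_inner_pos`); also `⟪w' μ, α⟫ ≥ 0`. So the defect is
nonnegative and it vanishes only if `b = a`.

If `b = a`, then for `α ∈ Φ_a⁺` both `⟪w' μ, α⟫` and `⟪κ, α⟫` vanish, since their sum is
`⟪a, α⟫ = 0`. Hence `W_a` preserves `S`. Given `γ ∈ S`, choose `u ∈ W_a` with `u γ`
antidominant for `Φ_a⁺`; then `⟪γ, a⟫ = ⟪u γ, y⟫ - ⟪u γ, ρ_a⟫ > 0`, so `γ` is positive. Thus
`w' Φ⁺ ⊆ Φ⁺`, and `w' = 1` because the Weyl group acts freely on positive systems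
(`eq_one_of_map_pos`, proved through simple roots and the exchange condition). Therefore
`w = g⁻¹ ∈ W_a` and `μ + ρ = y = a + ρ_a`. In the converse direction `β = -w ρ_a`, and both sides
of the equality are `‖ρ_a‖²` because `ρ_a` is `Φ_a`-dominant.
-/

open scoped RealInnerProductSpace

namespace WeylEquality

variable {E : Type*} [NormedAddCommGroup E] [InnerProductSpace ℝ E]

/-! ### Reflections and the groups they generate -/

/-- The orthogonal reflection in the hyperplane `α^⊥`. -/
noncomputable def refl (α : E) : E ≃ₗᵢ[ℝ] E := (ℝ ∙ α)ᗮ.reflection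

lemma refl_apply (α x : E) : refl α x = x - (2 * ⟪x, α⟫ / ⟪α, α⟫) • α := by
  rw [refl, Submodule.reflection_orthogonal_apply, Submodule.reflection_singleton_apply,
    real_inner_self_eq_norm_sq, real_inner_comm]
  simp only [RCLike.ofReal_real_eq_id, id, neg_sub, two_smul, ← add_smul]
  congr 2
  ring

lemma mul_app (u u' : E ≃ₗᵢ[ℝ] E) (x : E) : (u * u') x = u (u' x) := rfl

lemma refl_refl (α x : E) : refl α (refl α x) = x := Submodule.reflection_reflection _ x

lemma refl_mul_self (α : E) : refl α * refl α = 1 := Submodule.reflection_mul_reflection _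

lemma refl_inv (α : E) : (refl α)⁻¹ = refl α := Submodule.reflection_inv

lemma refl_self (α : E) : refl α α = -α :=
  Submodule.reflection_orthogonalComplement_singleton_eq_neg α

lemma refl_inner_left (α x : E) : ⟪refl α x, α⟫ = -⟪x, α⟫ := by
  have h := (refl α).inner_map_map x α
  rw [refl_self, inner_neg_right] at h
  linarith

lemma refl_of_inner_eq_zero {α x : E} (h : ⟪x, α⟫ = 0) : refl α x = x := by
  simp [refl_apply, h]

/-- Reflections are conjugated along isometries: `s_{u α} u = u s_α`. -/
lemma refl_map_mul (u : E ≃ₗᵢ[ℝ] E) (α : E) : refl (u α) * u = u * refl α := by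
  ext x
  simp [refl_apply]

/-- The subgroup of the orthogonal group generated by the reflections in the elements of `A`. -/
def reflGroup (A : Finset E) : Subgroup (E ≃ₗᵢ[ℝ] E) :=
  Subgroup.closure
    { w : E ≃ₗᵢ[ℝ] E | ∃ α ∈ A, ∀ x : E, w x = x - (2 * ⟪x, α⟫ / ⟪α, α⟫) • α }

lemma refl_mem_reflGroup {A : Finset E} {α : E} (h : α ∈ A) : refl α ∈ reflGroup A :=
  Subgroup.subset_closure ⟨α, h, refl_apply α⟩

/-- Since reflections are involutions, an element of `reflGroup A` is reached from `1` by
left multiplications with reflections alone. -/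
lemma reflGroup_induction {A : Finset E} {p : (E ≃ₗᵢ[ℝ] E) → Prop} (one : p 1)
    (mul_left : ∀ α ∈ A, ∀ u ∈ reflGroup A, p u → p (refl α * u))
    {u : E ≃ₗᵢ[ℝ] E} (hu : u ∈ reflGroup A) : p u := by
  have key : ∀ x : E ≃ₗᵢ[ℝ] E, (∃ α ∈ A, ∀ y : E, x y = y - (2 * ⟪y, α⟫ / ⟪α, α⟫) • α) →
      ∃ α ∈ A, x = refl α := by
    rintro x ⟨α, hα, hx⟩
    exact ⟨α, hα, by ext y; rw [hx, refl_apply]⟩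
  refine Subgroup.closure_induction_left (p := fun u _ => p u) one ?_ ?_ hu
  · intro x hx y hy hp
    obtain ⟨α, hα, rfl⟩ := key x hx
    exact mul_left α hα y hy hp
  · intro x hx y hy hp
    obtain ⟨α, hα, rfl⟩ := key x hx
    rw [refl_inv]
    exact mul_left α hα y hy hp

lemma reflGroup_mono {A B : Finset E} (h : A ⊆ B) : reflGroup A ≤ reflGroup B := by
  intro u hu
  exact reflGroup_induction (one_mem _)
    (fun α hα u _ hp => mul_mem (refl_mem_reflGroup (h hα)) hp) hu

lemma reflGroup_map_mem {A S : Finset E} (hS : ∀ α ∈ A, ∀ γ ∈ S, refl α γ ∈ S)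
    {u : E ≃ₗᵢ[ℝ] E} (hu : u ∈ reflGroup A) : ∀ γ ∈ S, u γ ∈ S :=
  reflGroup_induction (p := fun u => ∀ γ ∈ S, u γ ∈ S) (fun _ hγ => hγ)
    (fun α hα _ _ hp γ hγ => hS α hα _ (hp γ hγ)) hu

lemma reflGroup_fixed {A : Finset E} {x : E} (hx : ∀ α ∈ A, ⟪x, α⟫ = 0)
    {u : E ≃ₗᵢ[ℝ] E} (hu : u ∈ reflGroup A) : u x = x :=
  reflGroup_induction (p := fun u => u x = x) rfl
    (fun α hα u _ hp => by
      rw [mul_app, hp, refl_of_inner_eq_zero (hx α hα)]) hu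

/-- The Weyl group is finite: an element is determined by the permutation it induces on `Φ`,
because it is trivial on the orthogonal complement of the span of `Φ`. -/
lemma reflGroup_finite [FiniteDimensional ℝ E] {Φ : Finset E}
    (hΦ : ∀ α ∈ Φ, ∀ γ ∈ Φ, refl α γ ∈ Φ) : Finite (reflGroup Φ) := by
  let f : reflGroup Φ → (Φ → Φ) := fun u γ => ⟨u.1 γ.1, reflGroup_map_mem hΦ u.2 _ γ.2⟩
  refine Finite.of_injective f ?_
  rintro ⟨u, hu⟩ ⟨u', hu'⟩ h
  have hγ : ∀ γ ∈ Φ, u γ = u' γ := fun γ hγ => congrArg Subtype.val (congrFun h ⟨γ, hγ⟩)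
  refine Subtype.ext (LinearIsometryEquiv.ext fun x => ?_)
  obtain ⟨y, hy, z, hz, rfl⟩ :=
    (Submodule.span ℝ (Φ : Set E)).exists_add_mem_mem_orthogonal x
  have hz' : ∀ α ∈ Φ, ⟪z, α⟫ = 0 := fun α hα =>
    Submodule.inner_left_of_mem_orthogonal (Submodule.subset_span hα) hz
  have hy' : u y = u' y := by
    induction hy using Submodule.span_induction with
    | mem x hx => exact hγ x hx
    | zero => simp
    | add a b _ _ h1 h2 => rw [map_add, map_add, h1, h2]
    | smul c a _ h1 => rw [map_smul, map_smul, h1]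
  change u (y + z) = u' (y + z)
  rw [map_add, map_add, hy', reflGroup_fixed hz' hu, reflGroup_fixed hz' hu']

/-- Every orbit of a subgroup generated by reflections in positive roots meets the corresponding
closed chamber: take the point of the orbit with the largest inner product with `v`. -/
lemma exists_dominant [FiniteDimensional ℝ E] {Φ A : Finset E}
    (hΦ : ∀ α ∈ Φ, ∀ γ ∈ Φ, refl α γ ∈ Φ) (hA : A ⊆ Φ) {v : E} (hv : ∀ α ∈ A, 0 < ⟪α, v⟫)
    (x : E) : ∃ g ∈ reflGroup A, ∀ α ∈ A, 0 ≤ ⟪g x, α⟫ := by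
  have := reflGroup_finite hΦ
  have hfin : (reflGroup A : Set (E ≃ₗᵢ[ℝ] E)).Finite :=
    Set.Finite.subset (Set.toFinite (reflGroup Φ : Set (E ≃ₗᵢ[ℝ] E))) (reflGroup_mono hA)
  obtain ⟨g, hg, hmax⟩ := Set.exists_max_image _ (fun g => ⟪g x, v⟫) hfin ⟨1, one_mem _⟩
  refine ⟨g, hg, fun α hα => ?_⟩
  by_contra! hneg
  have h := hmax (refl α * g) (mul_mem (refl_mem_reflGroup hα) hg)
  rw [mul_app, refl_apply, inner_sub_left, real_inner_smul_left] at h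
  have hα0 : 0 < ⟪α, α⟫ := by
    rw [real_inner_self_pos]
    rintro rfl
    simpa using hv 0 hα
  have h1 : 2 * ⟪g x, α⟫ / ⟪α, α⟫ < 0 := div_neg_of_neg_of_pos (by linarith) hα0
  nlinarith [mul_neg_of_neg_of_pos h1 (hv α hα)]

/-! ### Pairing argument for sums of roots -/

/-- In `⟪∑ S, α⟫` the contributions of `γ` and `s_α γ` cancel when both lie in `S`. -/
lemma sum_inner_eq [DecidableEq E] (S : Finset E) (α : E) :
    ∑ γ ∈ S, ⟪γ, α⟫ = ∑ γ ∈ S with refl α γ ∉ S, ⟪γ, α⟫ := by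
  rw [← Finset.sum_filter_add_sum_filter_not S (fun γ => refl α γ ∈ S)]
  simp only [add_eq_right]
  refine Finset.sum_involution (fun γ _ => refl α γ) ?_ ?_ ?_ ?_
  · intro γ _
    rw [refl_inner_left, add_neg_cancel]
  · intro γ _ hne heq
    have := refl_inner_left α γ
    rw [heq] at this
    exact hne (by linarith)
  · intro γ hγ
    rw [Finset.mem_filter] at hγ ⊢
    rw [refl_refl]
    exact ⟨hγ.2, hγ.1⟩
  · intro γ _
    exact refl_refl α γ

lemma sum_inner_nonneg {S : Finset E} {α : E} (h : ∀ γ ∈ S, refl α γ ∉ S → 0 < ⟪γ, α⟫) :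
    0 ≤ ∑ γ ∈ S, ⟪γ, α⟫ := by
  classical
  rw [sum_inner_eq]
  refine Finset.sum_nonneg fun γ hγ => ?_
  rw [Finset.mem_filter] at hγ
  exact (h γ hγ.1 hγ.2).le

/-- Strict form of `sum_inner_nonneg`: the sum is positive unless `s_α` preserves `S`. -/
lemma sum_inner_pos {S : Finset E} {α : E} (h : ∀ γ ∈ S, refl α γ ∉ S → 0 < ⟪γ, α⟫)
    {γ : E} (hγ : γ ∈ S) (hγ' : refl α γ ∉ S) : 0 < ∑ γ ∈ S, ⟪γ, α⟫ := by
  classical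
  rw [sum_inner_eq]
  refine Finset.sum_pos (fun γ hγ => ?_) ⟨γ, Finset.mem_filter.2 ⟨hγ, hγ'⟩⟩
  rw [Finset.mem_filter] at hγ
  exact h γ hγ.1 hγ.2

/-- If `α` and `γ` are positive but `s_α γ` is not, then `⟪γ, α⟫ > 0`. -/
lemma inner_pos_of_refl_neg {α γ v : E} (hα : 0 < ⟪α, v⟫) (hγ : 0 < ⟪γ, v⟫)
    (h : ⟪refl α γ, v⟫ ≤ 0) : 0 < ⟪γ, α⟫ := by
  rw [refl_apply, inner_sub_left, real_inner_smul_left] at h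
  by_contra! hn
  have : 2 * ⟪γ, α⟫ / ⟪α, α⟫ ≤ 0 :=
    div_nonpos_of_nonpos_of_nonneg (by linarith) real_inner_self_nonneg
  nlinarith [mul_nonpos_of_nonpos_of_nonneg this hα.le]

/-! ### Simple roots and freeness of the action on positive systems -/

open scoped NNReal in
/-- A nonzero element of the cone spanned by vectors positive on `v` is positive on `v`. -/
lemma cone_inner {D : Set E} {v : E} (hD : ∀ δ ∈ D, 0 < ⟪δ, v⟫) {x : E}
    (hx : x ∈ Submodule.span ℝ≥0 D) : 0 ≤ ⟪x, v⟫ ∧ (⟪x, v⟫ = 0 → x = 0) := by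
  induction hx using Submodule.span_induction with
  | mem x hx => exact ⟨(hD x hx).le, fun h => absurd h (hD x hx).ne'⟩
  | zero => simp
  | add a b _ _ h1 h2 =>
    rw [inner_add_left]
    refine ⟨add_nonneg h1.1 h2.1, fun h => ?_⟩
    rw [h1.2 (by linarith [h1.1, h2.1]), h2.2 (by linarith [h1.1, h2.1]), add_zero]
  | smul c a _ h1 =>
    rw [NNReal.smul_def, real_inner_smul_left]
    refine ⟨mul_nonneg c.2 h1.1, fun h => ?_⟩
    rcases mul_eq_zero.1 h with h | h
    · rw [h, zero_smul]
    · rw [h1.2 h, smul_zero]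

open scoped NNReal in
/-- Existence of a system of simple roots, in the form: a subset `D` of the positive roots `P`
whose cone contains `P` and such that each `s_δ`, `δ ∈ D`, permutes `P \ {δ}`.
Any minimal `D` generating the cone works. -/
lemma exists_simple {Φ P : Finset E} (hΦ : ∀ α ∈ Φ, ∀ γ ∈ Φ, refl α γ ∈ Φ)
    (hred : ∀ α ∈ Φ, ∀ t : ℝ, t • α ∈ Φ → t = 1 ∨ t = -1)
    {v : E} (hv : ∀ α ∈ Φ, ⟪α, v⟫ ≠ 0) (hP : ∀ α, α ∈ P ↔ α ∈ Φ ∧ 0 < ⟪α, v⟫) :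
    ∃ D ⊆ P, (∀ γ ∈ P, γ ∈ Submodule.span ℝ≥0 (D : Set E)) ∧
      ∀ δ ∈ D, ∀ γ ∈ P, γ ≠ δ → refl δ γ ∈ P := by
  classical
  obtain ⟨D, hDP, hmin⟩ := exists_minimal_le_of_wellFoundedLT
    (fun D : Finset E => ∀ γ ∈ P, γ ∈ Submodule.span ℝ≥0 (D : Set E)) P
    (fun γ hγ => Submodule.subset_span hγ)
  refine ⟨D, hDP, hmin.1, fun δ hδ γ hγ hne => ?_⟩
  have hδP := (hP δ).1 (hDP hδ)
  have hγP := (hP γ).1 hγ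
  by_contra hcon
  have hr := hΦ δ hδP.1 γ hγP.1
  have hneg : ⟪refl δ γ, v⟫ < 0 :=
    lt_of_le_of_ne (not_lt.1 fun h => hcon ((hP _).2 ⟨hr, h⟩)) (hv _ hr)
  -- the positive root `η = -s_δ γ` satisfies `γ + η = c δ`
  have hη : -(refl δ γ) ∈ P := by
    refine (hP _).2 ⟨?_, by rw [inner_neg_left]; linarith⟩
    rw [← map_neg, ← refl_self γ]
    exact hΦ _ hδP.1 _ (hΦ _ hγP.1 _ hγP.1)
  set c : ℝ := 2 * ⟪γ, δ⟫ / ⟪δ, δ⟫ with hc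
  have hsum : γ + -(refl δ γ) = c • δ := by rw [refl_apply]; abel
  have hins : (D : Set E) = insert δ ((D.erase δ : Finset E) : Set E) := by
    rw [← Finset.coe_insert, Finset.insert_erase hδ]
  have hDpos : ∀ ε ∈ ((D.erase δ : Finset E) : Set E), 0 < ⟪ε, v⟫ := fun ε hε =>
    ((hP ε).1 (hDP (Finset.mem_of_mem_erase hε))).2
  have h1 := hmin.1 γ hγ
  have h2 := hmin.1 _ hη
  rw [hins, Submodule.mem_span_insert] at h1 h2
  obtain ⟨a, z, hz, h1⟩ := h1
  obtain ⟨b, y, hy, h2⟩ := h2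
  have hzy : z + y = (c - a - b) • δ := by
    rw [h2, h1, NNReal.smul_def, NNReal.smul_def] at hsum
    rw [sub_smul, sub_smul, ← hsum]
    abel
  have hz' := cone_inner hDpos hz
  have hy' := cone_inner hDpos hy
  have hzyv := congrArg (fun x => ⟪x, v⟫) hzy
  simp only [inner_add_left, real_inner_smul_left] at hzyv
  rcases lt_or_ge 0 (c - a - b) with hpos | hnon
  · -- then `δ` lies in the cone of `D \ {δ}`, against minimality
    have hδmem : δ ∈ Submodule.span ℝ≥0 ((D.erase δ : Finset E) : Set E) := by
      have ht : (Real.toNNReal (c - a - b)⁻¹) • (z + y) = δ := by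
        rw [NNReal.smul_def, hzy, Real.coe_toNNReal _ (inv_pos.2 hpos).le, smul_smul,
          inv_mul_cancel₀ hpos.ne', one_smul]
      have hm := Submodule.smul_mem _ (Real.toNNReal (c - a - b)⁻¹) (add_mem hz hy)
      rwa [ht] at hm
    have hle : D ≤ D.erase δ := hmin.2 (fun ε hε => by
      have := hmin.1 ε hε
      rw [hins] at this
      exact Submodule.span_le.2 (Set.insert_subset hδmem Submodule.subset_span) this)
      (Finset.erase_subset _ _)
    exact Finset.notMem_erase δ D (hle hδ)
  · -- then `z = y = 0`, so `γ` is a multiple of `δ`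
    have hz0 : z = 0 := hz'.2 (by nlinarith [hz'.1, hy'.1, hδP.2])
    rw [hz0, add_zero, NNReal.smul_def] at h1
    rcases hred δ hδP.1 a (h1 ▸ hγP.1) with h | h
    · exact hne (by rw [h1, h, one_smul])
    · linarith [a.2, show (a : ℝ) = -1 from h]

/-- The reflection in any positive root is a product of reflections in simple roots, by induction
on `⟪α, v⟫`: reflecting a non-simple positive root in a suitable simple root lowers this value. -/
lemma refl_mem_simple {Φ P D : Finset E} (h0 : (0 : E) ∉ Φ)
    {v : E} (hP : ∀ α, α ∈ P ↔ α ∈ Φ ∧ 0 < ⟪α, v⟫) (hDP : D ⊆ P)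
    (hcone : ∀ γ ∈ P, γ ∈ Submodule.span NNReal (D : Set E))
    (hD : ∀ δ ∈ D, ∀ γ ∈ P, γ ≠ δ → refl δ γ ∈ P) :
    ∀ α ∈ P, refl α ∈ reflGroup D := by
  classical
  by_contra! hbad
  obtain ⟨α₀, hα₀, hα₀'⟩ := hbad
  obtain ⟨α, hα, hmin⟩ := Finset.exists_min_image (P.filter fun α => refl α ∉ reflGroup D)
    (fun α => ⟪α, v⟫) ⟨α₀, Finset.mem_filter.2 ⟨hα₀, hα₀'⟩⟩
  rw [Finset.mem_filter] at hα
  -- some simple root has positive inner product with `α`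
  obtain ⟨δ, hδ, hδα⟩ : ∃ δ ∈ D, 0 < ⟪δ, α⟫ := by
    by_contra! hno
    have hle : ∀ x ∈ Submodule.span NNReal (D : Set E), ⟪x, α⟫ ≤ 0 := by
      intro x hx
      induction hx using Submodule.span_induction with
      | mem x hx => exact hno x hx
      | zero => simp
      | add a b _ _ h1 h2 => rw [inner_add_left]; exact add_nonpos h1 h2
      | smul c a _ h1 =>
        rw [NNReal.smul_def, real_inner_smul_left]
        exact mul_nonpos_of_nonneg_of_nonpos c.2 h1
    have h := hle α (hcone α hα.1)
    rw [real_inner_self_nonpos] at h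
    exact h0 (h ▸ ((hP α).1 hα.1).1)
  have hne : α ≠ δ := by
    rintro rfl
    exact hα.2 (refl_mem_reflGroup hδ)
  have hδP := (hP δ).1 (hDP hδ)
  have hmem := hD δ hδ α hα.1 hne
  have hlt : ⟪refl δ α, v⟫ < ⟪α, v⟫ := by
    rw [refl_apply, inner_sub_left, real_inner_smul_left]
    have hδ0 : 0 < ⟪δ, δ⟫ := by
      rw [real_inner_self_pos]
      rintro rfl
      exact h0 hδP.1
    have : 0 < 2 * ⟪α, δ⟫ / ⟪δ, δ⟫ := by
      rw [real_inner_comm]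
      positivity
    linarith [mul_pos this hδP.2]
  have hgood : refl (refl δ α) ∈ reflGroup D := by
    by_contra hb
    exact absurd (hmin _ (Finset.mem_filter.2 ⟨hmem, hb⟩)) (not_le.2 hlt)
  have hconj : refl α = refl δ * (refl (refl δ α) * refl δ) := by
    rw [refl_map_mul, ← mul_assoc, refl_mul_self, one_mul]
  apply hα.2
  rw [hconj]
  have hs := refl_mem_reflGroup hδ
  exact mul_mem hs (mul_mem hgood hs)

/-- The product of the reflections in the members of a list. -/
noncomputable def word (L : List E) : E ≃ₗᵢ[ℝ] E := (L.map refl).prod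

lemma word_cons (δ : E) (L : List E) : word (δ :: L) = refl δ * word L := by simp [word]

lemma word_concat (L : List E) (δ : E) : word (L ++ [δ]) = word L * refl δ := by simp [word]

/-- Exchange condition: if a word in simple reflections sends the simple root `δ` to a negative
root, then multiplying by `s_δ` on the right amounts to deleting a letter. -/
lemma exchange {P D : Finset E} (hD : ∀ δ ∈ D, ∀ γ ∈ P, γ ≠ δ → refl δ γ ∈ P)
    {δ : E} (hδ : δ ∈ P) :
    ∀ L : List E, (∀ ε ∈ L, ε ∈ D) → word L δ ∉ P →
      ∃ L' : List E, (∀ ε ∈ L', ε ∈ D) ∧ L'.length + 1 = L.length ∧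
        word L * refl δ = word L' := by
  intro L
  induction L with
  | nil => intro _ h; exact absurd hδ h
  | cons ε L ih =>
    intro hL h
    have hε : ε ∈ D := hL ε (by simp)
    have hL' : ∀ ε ∈ L, ε ∈ D := fun x hx => hL x (by simp [hx])
    by_cases hLδ : word L δ ∈ P
    · have heq : word L δ = ε := by
        by_contra hne
        exact h (by rw [word_cons]; exact hD ε hε _ hLδ hne)
      refine ⟨L, hL', by simp, ?_⟩
      rw [word_cons, mul_assoc, ← refl_map_mul, heq, ← mul_assoc, refl_mul_self, one_mul]
    · obtain ⟨L', h1, h2, h3⟩ := ih hL' hLδ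
      refine ⟨ε :: L', ?_, by simp [h2], ?_⟩
      · intro x hx
        rcases List.mem_cons.1 hx with rfl | hx
        · exact hε
        · exact h1 x hx
      · rw [word_cons, word_cons, mul_assoc, h3]

/-- The Weyl group acts freely on positive systems. -/
lemma eq_one_of_map_pos {Φ P : Finset E} (h0 : (0 : E) ∉ Φ)
    (hΦ : ∀ α ∈ Φ, ∀ γ ∈ Φ, refl α γ ∈ Φ)
    (hred : ∀ α ∈ Φ, ∀ t : ℝ, t • α ∈ Φ → t = 1 ∨ t = -1)
    {v : E} (hv : ∀ α ∈ Φ, ⟪α, v⟫ ≠ 0) (hP : ∀ α, α ∈ P ↔ α ∈ Φ ∧ 0 < ⟪α, v⟫)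
    {w : E ≃ₗᵢ[ℝ] E} (hw : w ∈ reflGroup Φ) (hwP : ∀ γ ∈ P, w γ ∈ P) : w = 1 := by
  obtain ⟨D, hDP, hcone, hD⟩ := exists_simple hΦ hred hv hP
  have hgen := refl_mem_simple h0 hP hDP hcone hD
  have hwD : w ∈ reflGroup D := by
    refine reflGroup_induction (p := fun u => u ∈ reflGroup D) (one_mem _) ?_ hw
    intro α hα u _ hu
    refine mul_mem ?_ hu
    rcases lt_or_gt_of_ne (hv α hα) with h | h
    · have hneg : -α ∈ P := (hP _).2
        ⟨by rw [← refl_self α]; exact hΦ α hα α hα, by rw [inner_neg_left]; linarith⟩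
      have : refl α = refl (-α) := by
        ext x
        simp [refl_apply, neg_div]
      rw [this]
      exact hgen _ hneg
    · exact hgen _ ((hP α).2 ⟨hα, h⟩)
  have hword : ∃ L : List E, (∀ ε ∈ L, ε ∈ D) ∧ w = word L := by
    refine reflGroup_induction (p := fun u => ∃ L : List E, (∀ ε ∈ L, ε ∈ D) ∧ u = word L)
      ⟨[], by simp, rfl⟩ ?_ hwD
    rintro α hα u _ ⟨L, hL, rfl⟩
    refine ⟨α :: L, fun x hx => ?_, (word_cons α L).symm⟩
    rcases List.mem_cons.1 hx with rfl | hx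
    · exact hα
    · exact hL x hx
  have main : ∀ n : ℕ, ∀ L : List E, L.length = n → (∀ ε ∈ L, ε ∈ D) →
      (∀ γ ∈ P, word L γ ∈ P) → word L = 1 := by
    intro n
    induction n using Nat.strong_induction_on with
    | _ n ih =>
      intro L hlen hL hLP
      rcases List.eq_nil_or_concat L with rfl | ⟨L₁, δ, rfl⟩
      · rfl
      rw [List.concat_eq_append] at *
      have hδ : δ ∈ D := hL δ (by simp)
      have hδP := hLP δ (hDP hδ)
      rw [word_concat, mul_app, refl_self, map_neg] at hδP
      have hnot : word L₁ δ ∉ P := fun h => by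
        have h1 := ((hP _).1 h).2
        have h2 := ((hP _).1 hδP).2
        rw [inner_neg_left] at h2
        linarith
      obtain ⟨L', h1, h2, h3⟩ := exchange hD (hDP hδ) L₁
        (fun x hx => hL x (by simp [hx])) hnot
      rw [word_concat, h3] at hLP ⊢
      refine ih L'.length ?_ L' rfl h1 hLP
      rw [← hlen, List.length_append, List.length_singleton]
      omega
  obtain ⟨L, hL, rfl⟩ := hword
  exact main _ L rfl hL hwP

/-! ### Invariance of the trace term -/

/-- `∑_{α ∈ A} |⟪α, x⟫|` is invariant under `reflGroup A` when `A` is a positive half of a root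
system: up to signs, a reflection permutes `A`. -/
lemma sum_abs_inner_map {A : Finset E}
    (hA : ∀ δ ∈ A, ∀ α ∈ A, refl δ α ∈ A ∨ -refl δ α ∈ A) (hneg : ∀ α ∈ A, -α ∉ A)
    {u : E ≃ₗᵢ[ℝ] E} (hu : u ∈ reflGroup A) (x : E) :
    ∑ α ∈ A, |⟪α, u x⟫| = ∑ α ∈ A, |⟪α, x⟫| := by
  classical
  refine reflGroup_induction
    (p := fun u => ∑ α ∈ A, |⟪α, u x⟫| = ∑ α ∈ A, |⟪α, x⟫|) rfl ?_ hu
  intro δ hδ u _ hp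
  rw [← hp]
  let i : E → E := fun α => if refl δ α ∈ A then refl δ α else -refl δ α
  have hi : ∀ α ∈ A, i α ∈ A := by
    intro α hα
    by_cases h : refl δ α ∈ A
    · simpa only [i, if_pos h] using h
    · simpa only [i, if_neg h] using (hA δ hδ α hα).resolve_left h
  have hii : ∀ α ∈ A, i (i α) = α := by
    intro α hα
    by_cases h : refl δ α ∈ A
    · simp only [i, if_pos h, refl_refl, if_pos hα]
    · simp only [i, if_neg h, map_neg, refl_refl, if_neg (hneg α hα), neg_neg]
  refine Finset.sum_nbij' i i hi hi hii hii fun α _ => ?_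
  have hmove : ⟪α, (refl δ * u) x⟫ = ⟪refl δ α, u x⟫ := by
    rw [mul_app, ← (refl δ).inner_map_map, refl_refl]
  rw [hmove]
  by_cases h : refl δ α ∈ A
  · simp only [i, if_pos h]
  · simp only [i, if_neg h, inner_neg_left, abs_neg]

end WeylEquality

open WeylEquality in
/-- For dominant `a` and `μ`, `w ∈ W` and `β = a - w (μ + ρ)`,
equality `‖β‖² = (1/2) ∑_{α ∈ Φ_a⁺} |⟪α, β⟫|` holds if and only if `w ∈ W_a` and
`a = μ + ρ - ρ_a`; in that case `⟪μ, α⟫ = 0` for every `α ∈ Φ_a⁺` and `β = -w ρ_a`,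
so that `β` belongs to the `W`-orbit of `-ρ_a`. -/
theorem norm_sq_beta_eq_half_trace_iff
    {E : Type*} [NormedAddCommGroup E] [InnerProductSpace ℝ E] [FiniteDimensional ℝ E]
    -- Φ is a finite, reduced, crystallographic root system
    (Φ : Finset E) (h0 : (0 : E) ∉ Φ)
    (hrefl : ∀ α ∈ Φ, ∀ γ ∈ Φ, γ - (2 * ⟪γ, α⟫ / ⟪α, α⟫) • α ∈ Φ)
    (hred : ∀ α ∈ Φ, ∀ t : ℝ, t • α ∈ Φ → t = 1 ∨ t = -1)
    (hcrys : ∀ α ∈ Φ, ∀ γ ∈ Φ, ∃ n : ℤ, 2 * ⟪γ, α⟫ / ⟪α, α⟫ = (n : ℝ))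
    -- Φpos is a positive system for Φ
    (Φpos : Finset E) (v : E) (hv : ∀ α ∈ Φ, ⟪α, v⟫ ≠ 0)
    (hpos : ∀ α : E, α ∈ Φpos ↔ α ∈ Φ ∧ 0 < ⟪α, v⟫)
    -- ρ is the half sum of the positive roots
    (ρ : E) (hρ : ρ = (2⁻¹ : ℝ) • ∑ α ∈ Φpos, α)
    -- W is the Weyl group: the subgroup generated by the reflections s_α, α ∈ Φ
    (W : Subgroup (E ≃ₗᵢ[ℝ] E))
    (hW : W = Subgroup.closure
      { w : E ≃ₗᵢ[ℝ] E | ∃ α ∈ Φ, ∀ x : E, w x = x - (2 * ⟪x, α⟫ / ⟪α, α⟫) • α })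
    (a μ : E) (ha : (∀ α ∈ Φpos, 0 ≤ ⟪a, α⟫)) (hμ : (∀ α ∈ Φpos, 0 ≤ ⟪μ, α⟫))
    -- Φa is the set of positive roots orthogonal to a, and ρa its half sum
    (Φa : Finset E) (hΦa : ∀ α : E, α ∈ Φa ↔ α ∈ Φpos ∧ ⟪α, a⟫ = 0)
    (ρa : E) (hρa : ρa = (2⁻¹ : ℝ) • ∑ α ∈ Φa, α)
    -- Wa is the subgroup generated by the reflections s_α, α ∈ Φa
    (Wa : Subgroup (E ≃ₗᵢ[ℝ] E))
    (hWa : Wa = Subgroup.closure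
      { u : E ≃ₗᵢ[ℝ] E | ∃ α ∈ Φa, ∀ x : E, u x = x - (2 * ⟪x, α⟫ / ⟪α, α⟫) • α })
    (w : E ≃ₗᵢ[ℝ] E) (hw : w ∈ W)
    (β : E) (hβ : β = a - w (μ + ρ)) :
    (‖β‖ ^ 2 = (2⁻¹ : ℝ) * ∑ α ∈ Φa, |⟪α, β⟫| ↔ w ∈ Wa ∧ a = μ + ρ - ρa) ∧
      (‖β‖ ^ 2 = (2⁻¹ : ℝ) * ∑ α ∈ Φa, |⟪α, β⟫| →
        (∀ α ∈ Φa, ⟪μ, α⟫ = 0) ∧ β = -(w ρa) ∧ ∃ u : E ≃ₗᵢ[ℝ] E, u ∈ W ∧ β = u (-ρa)) := by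
  have hΦ : ∀ α ∈ Φ, ∀ γ ∈ Φ, refl α γ ∈ Φ := fun α hα γ hγ => by
    rw [refl_apply]
    exact hrefl α hα γ hγ
  change W = reflGroup Φ at hW
  change Wa = reflGroup Φa at hWa
  subst hW hWa
  classical
  have hnegΦ : ∀ α ∈ Φ, -α ∈ Φ := fun α hα => refl_self α ▸ hΦ α hα α hα
  have hΦa' : ∀ α ∈ Φa, α ∈ Φ ∧ 0 < ⟪α, v⟫ ∧ ⟪α, a⟫ = 0 := fun α hα =>
    ⟨((hpos α).1 ((hΦa α).1 hα).1).1, ((hpos α).1 ((hΦa α).1 hα).1).2, ((hΦa α).1 hα).2⟩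
  have hmkΦa : ∀ α ∈ Φ, 0 < ⟪α, v⟫ → ⟪α, a⟫ = 0 → α ∈ Φa := fun α h1 h2 h3 =>
    (hΦa α).2 ⟨(hpos α).2 ⟨h1, h2⟩, h3⟩
  have hsub : Φa ⊆ Φ := fun α hα => (hΦa' α hα).1
  have haa : ∀ α ∈ Φa, ⟪a, α⟫ = 0 := fun α hα => by
    rw [real_inner_comm]; exact (hΦa' α hα).2.2
  have hfix : ∀ u ∈ reflGroup Φa, u a = a := fun u hu => reflGroup_fixed haa hu
  -- reflections in `Φa` fix `a`, hence preserve inner products with `a`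
  have hra : ∀ α ∈ Φa, ∀ γ : E, ⟪refl α γ, a⟫ = ⟪γ, a⟫ := fun α hα γ => by
    have h := (refl α).inner_map_map γ a
    rwa [refl_of_inner_eq_zero (haa α hα)] at h
  have hpm : ∀ α ∈ Φ, ⟪α, a⟫ = 0 → α ∈ Φa ∨ -α ∈ Φa := fun α hα h => by
    rcases lt_or_gt_of_ne (hv α hα) with h1 | h1
    · exact Or.inr (hmkΦa _ (hnegΦ α hα) (by rw [inner_neg_left]; linarith)
        (by rw [inner_neg_left, h, neg_zero]))
    · exact Or.inl (hmkΦa α hα h1 h)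
  have hΦaneg : ∀ α ∈ Φa, -α ∉ Φa := fun α hα h => by
    have h1 := (hΦa' α hα).2.1
    have h2 := (hΦa' _ h).2.1
    rw [inner_neg_left] at h2
    linarith
  have hΦarefl : ∀ δ ∈ Φa, ∀ α ∈ Φa, refl δ α ∈ Φa ∨ -refl δ α ∈ Φa := fun δ hδ α hα =>
    hpm _ (hΦ δ (hsub hδ) α (hsub hα)) (by rw [hra δ hδ, (hΦa' α hα).2.2])
  have hinv := fun u (hu : u ∈ reflGroup Φa) x => sum_abs_inner_map hΦarefl hΦaneg hu x
  have hρa_inner : ∀ x : E, ⟪ρa, x⟫ = 2⁻¹ * ∑ α ∈ Φa, ⟪α, x⟫ := fun x => by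
    rw [hρa, real_inner_smul_left, sum_inner]
  have hρaa : ⟪ρa, a⟫ = 0 := by
    rw [hρa_inner, Finset.sum_eq_zero fun α hα => (hΦa' α hα).2.2, mul_zero]
  -- for `Φa`-dominant `y` the trace term is linear
  have htrace : ∀ y : E, (∀ α ∈ Φa, 0 ≤ ⟪y, α⟫) →
      (2⁻¹ : ℝ) * ∑ α ∈ Φa, |⟪α, y⟫| = ⟪ρa, y⟫ := fun y hy => by
    rw [hρa_inner]
    congr 1
    refine Finset.sum_congr rfl fun α hα => abs_of_nonneg ?_
    rw [real_inner_comm]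
    exact hy α hα
  have htrβ : ∑ α ∈ Φa, |⟪α, β⟫| = ∑ α ∈ Φa, |⟪α, w (μ + ρ)⟫| := by
    refine Finset.sum_congr rfl fun α hα => ?_
    rw [hβ, inner_sub_right, (hΦa' α hα).2.2, zero_sub, abs_neg]
  have hρadom : ∀ α ∈ Φa, 0 ≤ ⟪ρa, α⟫ := fun α hα => by
    rw [hρa_inner]
    refine mul_nonneg (by norm_num) (sum_inner_nonneg fun γ hγ hγ' => ?_)
    refine inner_pos_of_refl_neg (hΦa' α hα).2.1 (hΦa' γ hγ).2.1 (not_lt.1 fun h => hγ' ?_)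
    exact hmkΦa _ (hΦ α (hsub hα) γ (hsub hγ)) h (by rw [hra α hα, (hΦa' γ hγ).2.2])
  -- `ρ` is strictly dominant; the root `α` itself contributes positively to `⟪ρ, α⟫`
  have hρdom : ∀ α ∈ Φpos, 0 < ⟪ρ, α⟫ := fun α hα => by
    have hα' := (hpos α).1 hα
    rw [hρ, real_inner_smul_left, sum_inner]
    refine mul_pos (by norm_num) (sum_inner_pos (fun γ hγ hγ' => ?_) hα fun h => ?_)
    · have hγP := (hpos γ).1 hγ
      exact inner_pos_of_refl_neg hα'.2 hγP.2
        (not_lt.1 fun h => hγ' ((hpos _).2 ⟨hΦ α hα'.1 γ hγP.1, h⟩))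
    · have h1 := ((hpos _).1 h).2
      rw [refl_self, inner_neg_left] at h1
      linarith [hα'.2]
  have hforward : ‖β‖ ^ 2 = (2⁻¹ : ℝ) * ∑ α ∈ Φa, |⟪α, β⟫| →
      (w ∈ reflGroup Φa ∧ a = μ + ρ - ρa) ∧ ∀ α ∈ Φa, ⟪μ, α⟫ = 0 := by
    intro heq
    obtain ⟨g, hg, hgdom⟩ := exists_dominant hΦ hsub (fun α hα => (hΦa' α hα).2.1) (w (μ + ρ))
    set w' : E ≃ₗᵢ[ℝ] E := g * w with hw'
    have hw'W : w' ∈ reflGroup Φ := mul_mem (reflGroup_mono hsub hg) hw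
    set y : E := w' (μ + ρ) with hy
    have hydom : ∀ α ∈ Φa, 0 ≤ ⟪y, α⟫ := hgdom
    have hnorm : ‖β‖ ^ 2 = ‖y - a‖ ^ 2 := by
      have h : g β = a - y := by rw [hβ, map_sub, hfix g hg]; rfl
      rw [← g.norm_map β, h, norm_sub_rev]
    have heq' : ‖y - a‖ ^ 2 = ⟪ρa, y⟫ := by
      rw [← hnorm, heq, htrβ, ← hinv g hg, ← htrace y hydom]
      rfl
    -- `P = w' Φ⁺` is the positive system for which `y` is dominant
    set P : Finset E := Φpos.image w' with hP
    have hw'v : ∀ γ : E, ⟪w' γ, w' v⟫ = ⟪γ, v⟫ := fun γ => w'.inner_map_map γ v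
    have hPsub : ∀ γ ∈ P, γ ∈ Φ ∧ 0 < ⟪γ, w' v⟫ ∧ 0 < ⟪y, γ⟫ ∧ 0 ≤ ⟪w' μ, γ⟫ := by
      intro γ' hγ'
      obtain ⟨γ, hγ, rfl⟩ := Finset.mem_image.1 hγ'
      refine ⟨reflGroup_map_mem hΦ hw'W γ ((hpos γ).1 hγ).1, ?_, ?_, ?_⟩
      · rw [hw'v]; exact ((hpos γ).1 hγ).2
      · rw [hy, w'.inner_map_map, inner_add_left]
        linarith [hμ γ hγ, hρdom γ hγ]
      · rw [w'.inner_map_map]; exact hμ γ hγ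
    have hPmem : ∀ γ ∈ Φ, γ ∈ P ∨ -γ ∈ P := by
      intro γ hγ
      have hγ' := reflGroup_map_mem hΦ (inv_mem hw'W) γ hγ
      have hback : w' (w'⁻¹ γ) = γ := w'.apply_symm_apply γ
      rcases lt_or_gt_of_ne (hv _ hγ') with h | h
      · refine Or.inr (Finset.mem_image.2 ⟨-(w'⁻¹ γ), (hpos _).2 ⟨hnegΦ _ hγ', ?_⟩, ?_⟩)
        · rw [inner_neg_left]; linarith
        · rw [map_neg, hback]
      · exact Or.inl (Finset.mem_image.2 ⟨w'⁻¹ γ, (hpos _).2 ⟨hγ', h⟩, hback⟩)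
    have hΦaP : Φa ⊆ P := by
      intro α hα
      refine (hPmem α (hsub hα)).resolve_right fun h => ?_
      have h1 := (hPsub _ h).2.2.1
      rw [inner_neg_right] at h1
      linarith [hydom α hα]
    -- `S` consists of the roots of `P` not orthogonal to `a`
    set S : Finset E := P \ Φa with hS
    have hSa : ∀ γ ∈ S, ⟪γ, a⟫ ≠ 0 := by
      intro γ hγ h
      rw [hS, Finset.mem_sdiff] at hγ
      have h1 := hPsub γ hγ.1
      have h2 := (hPsub _ (hΦaP ((hpm γ h1.1 h).resolve_left hγ.2))).2.1
      rw [inner_neg_left] at h2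
      linarith [h1.2.1]
    set κ : E := (2⁻¹ : ℝ) • ∑ γ ∈ S, γ with hκ
    have hw'ρ : w' ρ = κ + ρa := by
      have h1 : ∑ γ ∈ P, γ = ∑ γ ∈ Φpos, w' γ := Finset.sum_image w'.injective.injOn
      rw [hρ, map_smul, map_sum, ← h1, hκ, hρa, ← smul_add, hS, Finset.sum_sdiff hΦaP]
    have hSpair : ∀ α ∈ Φa, ∀ γ ∈ S, refl α γ ∉ S → 0 < ⟪γ, α⟫ := by
      intro α hα γ hγ hγ'
      have hγP := hPsub γ (Finset.mem_sdiff.1 hγ).1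
      have hr := hΦ α (hsub hα) γ hγP.1
      have hnot : refl α γ ∉ Φa := fun h => by
        have h1 := (hΦa' _ h).2.2
        rw [hra α hα] at h1
        exact hSa γ hγ h1
      have hnP : refl α γ ∉ P := fun h => hγ' (Finset.mem_sdiff.2 ⟨h, hnot⟩)
      have hneg := (hPsub _ ((hPmem _ hr).resolve_left hnP)).2.1
      rw [inner_neg_left] at hneg
      exact inner_pos_of_refl_neg (hPsub α (hΦaP hα)).2.1 hγP.2.1 (by linarith)
    have hκ_inner : ∀ α : E, ⟪κ, α⟫ = 2⁻¹ * ∑ γ ∈ S, ⟪γ, α⟫ := fun α => by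
      rw [hκ, real_inner_smul_left, sum_inner]
    have hκdom : ∀ α ∈ Φa, 0 ≤ ⟪κ, α⟫ := fun α hα => by
      rw [hκ_inner]
      exact mul_nonneg (by norm_num) (sum_inner_nonneg (hSpair α hα))
    have hμdom : ∀ α ∈ Φa, 0 ≤ ⟪w' μ, α⟫ := fun α hα => (hPsub α (hΦaP hα)).2.2.2
    set b : E := w' μ + κ with hb
    have hyb : y = b + ρa := by rw [hy, map_add, hw'ρ, hb]; abel
    have hbρa : 0 ≤ ⟪ρa, b⟫ := by
      rw [hρa_inner]
      refine mul_nonneg (by norm_num) (Finset.sum_nonneg fun α hα => ?_)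
      rw [real_inner_comm, hb, inner_add_left]
      exact add_nonneg (hμdom α hα) (hκdom α hα)
    -- the defect of the inequality is `‖b - a‖² + ⟪ρa, b⟫`
    have hba : b = a := by
      have h1 : y - a = (b - a) + ρa := by rw [hyb]; abel
      rw [h1, norm_add_sq_real, hyb, inner_add_right, real_inner_self_eq_norm_sq,
        real_inner_comm, inner_sub_right, hρaa] at heq'
      have h2 : ‖b - a‖ = 0 := by
        have h3 : ‖b - a‖ ^ 2 = 0 := le_antisymm (by linarith) (sq_nonneg _)
        exact pow_eq_zero_iff two_ne_zero |>.1 h3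
      exact sub_eq_zero.1 (norm_eq_zero.1 h2)
    have hboth : ∀ α ∈ Φa, ⟪w' μ, α⟫ = 0 ∧ ⟪κ, α⟫ = 0 := fun α hα => by
      have h1 : ⟪w' μ, α⟫ + ⟪κ, α⟫ = 0 := by
        rw [← inner_add_left, ← hb, hba, haa α hα]
      have h2 := hμdom α hα
      have h3 := hκdom α hα
      constructor <;> linarith
    have hSstable : ∀ α ∈ Φa, ∀ γ ∈ S, refl α γ ∈ S := by
      intro α hα γ hγ
      by_contra hcon
      have h1 := sum_inner_pos (hSpair α hα) hγ hcon
      have h2 := (hboth α hα).2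
      rw [hκ_inner] at h2
      linarith
    -- moving `γ ∈ S` to its `Φa`-antidominant conjugate shows that `⟪γ, a⟫ > 0`
    have hSpos : ∀ γ ∈ S, 0 < ⟪γ, a⟫ := by
      intro γ hγ
      obtain ⟨u, hu, hudom⟩ :=
        exists_dominant hΦ hsub (fun α hα => (hΦa' α hα).2.1) (-γ)
      have huγ := reflGroup_map_mem hSstable hu γ hγ
      have h1 := (hPsub _ (Finset.mem_sdiff.1 huγ).1).2.2.1
      have h2 : ⟪ρa, u γ⟫ ≤ 0 := by
        rw [hρa_inner]
        refine mul_nonpos_of_nonneg_of_nonpos (by norm_num) (Finset.sum_nonpos fun α hα => ?_)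
        have h3 := hudom α hα
        rw [map_neg, inner_neg_left, real_inner_comm] at h3
        linarith
      have h4 : ⟪a, u γ⟫ = ⟪γ, a⟫ := by
        have h := u.inner_map_map a γ
        rw [hfix u hu] at h
        rw [h, real_inner_comm]
      rw [hyb, hba, inner_add_left, h4] at h1
      linarith
    have hSΦ : ∀ γ ∈ P, γ ∈ Φpos := by
      intro γ hγ
      by_cases h : γ ∈ Φa
      · exact ((hΦa γ).1 h).1
      have hγS : γ ∈ S := Finset.mem_sdiff.2 ⟨hγ, h⟩
      have hγΦ := (hPsub γ hγ).1
      rcases lt_or_gt_of_ne (hv γ hγΦ) with h1 | h1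
      · have h2 := ha (-γ) ((hpos _).2 ⟨hnegΦ γ hγΦ, by rw [inner_neg_left]; linarith⟩)
        rw [inner_neg_right, real_inner_comm] at h2
        linarith [hSpos γ hγS]
      · exact (hpos γ).2 ⟨hγΦ, h1⟩
    have hone : w' = 1 := eq_one_of_map_pos h0 hΦ hred hv hpos hw'W
      fun γ hγ => hSΦ _ (Finset.mem_image_of_mem _ hγ)
    refine ⟨⟨?_, ?_⟩, fun α hα => ?_⟩
    · rw [eq_inv_of_mul_eq_one_right (hw'.symm.trans hone)]
      exact inv_mem hg
    · have h1 : μ + ρ = a + ρa := by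
        rw [← hba, ← hyb, hy, hone]
        rfl
      rw [h1, add_sub_cancel_right]
    · have h1 := (hboth α hα).1
      rw [hone] at h1
      exact h1
  have hβw : w ∈ reflGroup Φa → a = μ + ρ - ρa → β = -(w ρa) := fun h1 h2 => by
    have h3 : μ + ρ = a + ρa := by rw [h2]; abel
    rw [hβ, h3, map_add, hfix w h1]
    abel
  refine ⟨⟨fun h => (hforward h).1, ?_⟩, fun h => ?_⟩
  · rintro ⟨h1, h2⟩
    have h3 := hβw h1 h2
    have h4 : ∑ α ∈ Φa, |⟪α, β⟫| = ∑ α ∈ Φa, |⟪α, w ρa⟫| := by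
      rw [h3]
      simp only [inner_neg_right, abs_neg]
    rw [h4, hinv w h1, htrace ρa hρadom, h3, norm_neg, w.norm_map, real_inner_self_eq_norm_sq]
  · obtain ⟨⟨h1, h2⟩, h3⟩ := hforward h
    exact ⟨h3, hβw h1 h2, w, hw, by rw [hβw h1 h2, map_neg]⟩
end
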